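/- arXiv:1907.11476 — 3 statements merged into one kernel-verified Lean document; each statement's English description precedes it below -/
import Mathlib

section
/- Let N ≥ 1, let 2 ≤ q₁,…,q_N < ∞, and let X = T_{q₁} × ⋯ × T_{q_N} be the product of the homogeneous trees T_{q_i}. Let φ : ℕ → ℂ. Then φ belongs to R₊(X) if and only if there exists a positive finite Borel measure μ on [-1,1]^N such that φ(n₁ + ⋯ + n_N) = ∫_{[-1,1]^N} P_{n₁}^{(q₁)}(t₁) ⋯ P_{n_N}^{(q_N)}(t_N) dμ(t₁,…,t_N) for all (n₁,…,n_N) ∈ ℕ^N. -/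
/-!
Let `A i` be the operator on functions of the vector `n` of coordinate distances that averages over
the neighbours in the `i`-th tree. The recursion for `P_n` says that `n i ↦ P_{n i}(t)` is an
eigenfunction of `A i` with eigenvalue `t`, and that applying `P_n(A i)` to a function and
evaluating at distance `0` gives its value at distance `n`.

*From measures to kernels.* By the Schur product theorem and integration it is enough that the
kernel `f (d(x, y))` with `f n = P_n(t)`, `|t| ≤ 1`, is positive definite on one tree. The
eigenvalue equation says that the sum of the neighbours of a vertex `v` minus `(q + 1) t v` lies in
the radical of the quadratic form. So, working inwards from the largest distance to a root, a child
can be replaced by the mean of its siblings. What is left are combinations of siblings with total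
weight zero, which are orthogonal to everything closer to the root and on which the form is
`f 0 - f 2 ≥ 0` times the sum of squares.

*From kernels to measures.* Put `L p = (p(A) φ)(0)` for real polynomials `p` in commuting
variables `X i`. As `p(A)` is convolution by a finitely supported function, `L` is nonnegative on
squares. As the `A i` are contractions for the supremum norm, `L (X i ^ m * p)` is bounded in `m`,
and iterating the Cauchy–Schwarz inequality gives `|L (X i * p ^ 2)| ≤ L (p ^ 2)`; hence `L` is
nonnegative on the multiplicative cone generated by the nonnegative constants and the `1 ± X i`.
This cone is Archimedean, so the normalised functionals nonnegative on it form a compact convex set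
whose extreme points are multiplicative, that is, evaluations at points of the cube. By the
Krein–Milman theorem `L` is nonnegative on all polynomials that are nonnegative on the cube, and
the Riesz theorems extend it to continuous functions and represent it by a measure.
-/

open MeasureTheory Filter Finset
open scoped ComplexOrder

/-- The polynomials `P_n^{(q)}`. -/
noncomputable def treeP (q : ℕ) : ℕ → ℝ → ℝ
  | 0, _ => 1
  | 1, x => x
  | (n+2), x => (1 + 1/(q:ℝ)) * x * treeP q (n+1) x - (1/(q:ℝ)) * treeP q n x

/-- The polynomials `Q_n^{(q)}`. -/
noncomputable def treeQ (q : ℕ) : ℕ → ℝ → ℝ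
  | 0, _ => 1
  | 1, x => (1 + 1/(q:ℝ)) * x
  | (n+2), x => (1 + 1/(q:ℝ)) * x * treeQ q (n+1) x - (1/(q:ℝ)) * treeQ q n x

/-- A kernel `ψ` on a set `X` is positive definite. -/
def IsPDKernel {X : Type*} (ψ : X → X → ℂ) : Prop :=
  ∀ (n : ℕ) (x : Fin n → X) (z : Fin n → ℂ),
    0 ≤ ∑ i, ∑ j, ψ (x i) (x j) * (starRingEnd ℂ) (z i) * z j

/-- `G` is a `(q+1)`-homogeneous tree: connected, acyclic, every vertex has exactly
`q+1` neighbours. -/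
def IsHomTree {V : Type} (G : SimpleGraph V) (q : ℕ) : Prop :=
  G.Connected ∧ G.IsAcyclic ∧ ∀ v : V, (G.neighborSet v).ncard = q + 1

/-- `G` is a homogeneous tree of countably infinite degree. -/
def IsInfTree {V : Type} (G : SimpleGraph V) : Prop :=
  G.Connected ∧ G.IsAcyclic ∧ ∀ v : V, (G.neighborSet v).Countable ∧ (G.neighborSet v).Infinite

/-! ### Distances in a tree -/

section Tree

variable {V : Type*} {G : SimpleGraph V}

lemma tree_closer_neighbor_unique (hG : G.IsTree) {o v s s' : V} (hs : G.Adj v s)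
    (hs' : G.Adj v s') (h : G.dist o s + 1 = G.dist o v) (h' : G.dist o s' + 1 = G.dist o v) :
    s = s' := by
  obtain ⟨p, hp⟩ := hG.1.exists_walk_length_eq_dist s o
  obtain ⟨p', hp'⟩ := hG.1.exists_walk_length_eq_dist s' o
  rw [SimpleGraph.dist_comm] at hp hp'
  have hpath : (SimpleGraph.Walk.cons hs p).IsPath :=
    SimpleGraph.Walk.isPath_of_length_eq_dist _ (by
      rw [SimpleGraph.Walk.length_cons, hp, h, SimpleGraph.dist_comm])
  have hpath' : (SimpleGraph.Walk.cons hs' p').IsPath :=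
    SimpleGraph.Walk.isPath_of_length_eq_dist _ (by
      rw [SimpleGraph.Walk.length_cons, hp', h', SimpleGraph.dist_comm])
  have heq : (⟨_, hpath⟩ : G.Path v o) = ⟨_, hpath'⟩ := (hG.2.subsingleton_path v o).elim _ _
  simpa using congrArg SimpleGraph.Walk.snd (congrArg Subtype.val heq)

lemma exists_closer_neighbor (hG : G.Connected) {o v : V} (hne : o ≠ v) :
    ∃ s, G.Adj v s ∧ G.dist o s + 1 = G.dist o v := by
  obtain ⟨p, hp⟩ := hG.exists_walk_length_eq_dist v o
  cases p with
  | nil => exact absurd rfl hne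
  | @cons _ s _ hs p =>
    refine ⟨s, hs, ?_⟩
    have hle := SimpleGraph.dist_le p
    have hdiff := hs.diff_dist_adj (u := o)
    rw [SimpleGraph.Walk.length_cons, SimpleGraph.dist_comm] at hp
    rw [SimpleGraph.dist_comm] at hle
    omega

lemma tree_dist_eq_add_one_of_ne_closer (hG : G.IsTree) {o v s s' : V} (hs : G.Adj v s)
    (hs' : G.Adj v s') (h : G.dist o s + 1 = G.dist o v) (hne : s' ≠ s) :
    G.dist o s' = G.dist o v + 1 :=
  (hG.dist_eq_dist_add_one_of_adj o hs').resolve_left fun h' =>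
    hne (tree_closer_neighbor_unique hG hs' hs h'.symm h)

lemma tree_dist_eq_dist_add_dist (hG : G.IsTree) {o x w s : V} (hws : G.Adj w s)
    (ho : G.dist o s = G.dist o w + 1) (hx : G.dist x s + 1 = G.dist x w) :
    G.dist o x = G.dist o s + G.dist x s := by
  induction hn : G.dist x s generalizing w s with
  | zero =>
    obtain rfl := hG.1.dist_eq_zero_iff.1 hn
    rfl
  | succ n ih =>
    have hne : x ≠ s := by
      rintro rfl
      simp at hn
    obtain ⟨s', hs', hcloser⟩ := exists_closer_neighbor hG.1 hne
    have hne' : s' ≠ w := by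
      rintro rfl
      omega
    have hfar := tree_dist_eq_add_one_of_ne_closer hG hws.symm hs' ho.symm hne'
    have := ih hs' hfar hcloser (by omega)
    omega

lemma tree_dist_eq_add_one_of_dist_le (hG : G.IsTree) {o v w x : V} (hvw : G.Adj v w)
    (ho : G.dist o w = G.dist o v + 1) (hle : G.dist o x ≤ G.dist o w) (hne : x ≠ w) :
    G.dist x w = G.dist x v + 1 := by
  refine (hG.dist_eq_dist_add_one_of_adj x hvw).resolve_left fun h => hne ?_
  have := tree_dist_eq_dist_add_dist hG hvw ho h.symm
  exact hG.1.dist_eq_zero_iff.1 (by omega)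

section Regular

variable [G.LocallyFinite] {q : ℕ}

lemma sum_neighborFinset_dist_self (hreg : G.IsRegularOfDegree (q + 1)) (o : V) (f : ℕ → ℝ) :
    ∑ s ∈ G.neighborFinset o, f (G.dist o s) = (q + 1) * f 1 := by
  have hone : ∀ s ∈ G.neighborFinset o, f (G.dist o s) = f 1 := fun s hs => by
    rw [SimpleGraph.dist_eq_one_iff_adj.2 ((G.mem_neighborFinset o s).1 hs)]
  rw [sum_congr rfl hone, sum_const, G.card_neighborFinset_eq_degree, hreg o, nsmul_eq_mul]
  push_cast
  rfl

lemma tree_sum_neighborFinset_dist (hG : G.IsTree) (hreg : G.IsRegularOfDegree (q + 1))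
    {o v : V} {m : ℕ} (hm : G.dist o v = m + 1) (f : ℕ → ℝ) :
    ∑ s ∈ G.neighborFinset v, f (G.dist o s) = q * f (m + 2) + f m := by
  classical
  have hne : o ≠ v := by
    rintro rfl
    simp at hm
  obtain ⟨s, hs, hcloser⟩ := exists_closer_neighbor hG.1 hne
  have hmem := (G.mem_neighborFinset v s).2 hs
  have hfar : ∀ s' ∈ (G.neighborFinset v).erase s, f (G.dist o s') = f (m + 2) := by
    intro s' hs'
    rw [mem_erase, G.mem_neighborFinset] at hs'
    rw [tree_dist_eq_add_one_of_ne_closer hG hs hs'.2 hcloser hs'.1, hm]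
  rw [← sum_erase_add _ _ hmem, sum_congr rfl hfar, sum_const, card_erase_of_mem hmem,
    G.card_neighborFinset_eq_degree, hreg v, add_tsub_cancel_right, nsmul_eq_mul,
    show G.dist o s = m by omega]

lemma tree_exists_dist_eq (hG : G.IsTree) (hreg : G.IsRegularOfDegree (q + 1)) (hq : 1 ≤ q)
    (o : V) (n : ℕ) : ∃ x, G.dist o x = n := by
  induction n with
  | zero => exact ⟨o, G.dist_self⟩
  | succ n ih =>
    obtain ⟨x, rfl⟩ := ih
    have hcard : 1 < #(G.neighborFinset x) := by
      rw [G.card_neighborFinset_eq_degree, hreg x]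
      omega
    obtain ⟨a, ha, b, hb, hab⟩ := one_lt_card.1 hcard
    rw [G.mem_neighborFinset] at ha hb
    rcases hG.dist_eq_dist_add_one_of_adj o ha with hcloser | hfar
    · exact ⟨b, tree_dist_eq_add_one_of_ne_closer hG ha hb hcloser.symm hab.symm⟩
    · exact ⟨a, hfar⟩

end Regular

end Tree

namespace IsHomTree

variable {V : Type} {G : SimpleGraph V} {q : ℕ}

lemma isTree (h : IsHomTree G q) : G.IsTree := ⟨h.1, h.2.1⟩

/-- The neighbour sets of a homogeneous tree are finite. The definition of `IsHomTree` says so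
through `Set.ncard`, which is positive on finite sets only. -/
@[reducible]
noncomputable def locallyFinite (h : IsHomTree G q) : G.LocallyFinite := fun v =>
  (Set.finite_of_ncard_ne_zero (by rw [h.2.2 v]; omega : (G.neighborSet v).ncard ≠ 0)).fintype

lemma isRegularOfDegree [G.LocallyFinite] (h : IsHomTree G q) : G.IsRegularOfDegree (q + 1) :=
  fun v => by rw [← G.card_neighborSet_eq_degree, ← Nat.card_eq_fintype_card, Nat.card_coe_set_eq,
    h.2.2 v]

end IsHomTree

/-! ### Radial eigenkernels on a tree -/

lemma apply_self_nonneg_of_mem_sup_ker {M : Type*} [AddCommGroup M] [Module ℝ M]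
    {B : M →ₗ[ℝ] M →ₗ[ℝ] ℝ} (hB : ∀ x y, B x y = B y x) {P : Submodule ℝ M}
    (hP : ∀ p ∈ P, 0 ≤ B p p) {a r : M} (ha : a ∈ P ⊔ LinearMap.ker B) (hr : 0 ≤ B r r)
    (hort : ∀ p ∈ P, B r p = 0) : 0 ≤ B (a + r) (a + r) := by
  obtain ⟨p, hp, z, hz, rfl⟩ := Submodule.mem_sup.1 ha
  have hz_left : ∀ y, B z y = 0 := fun y => by
    rw [LinearMap.mem_ker.1 hz, LinearMap.zero_apply]
  have hz_right : ∀ y, B y z = 0 := fun y => by rw [hB, hz_left]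
  have hpr : B p r = 0 := by rw [hB, hort p hp]
  simp only [map_add, LinearMap.add_apply, hz_left, hz_right, hort p hp, hpr]
  linarith [hP p hp]

section KernelForm

variable {X : Type*}

/-- The bilinear form `(u, v) ↦ ∑ x y, u x * v y * K x y` of a real kernel `K`, on finitely
supported functions. -/
noncomputable def kernelForm (K : X → X → ℝ) : (X →₀ ℝ) →ₗ[ℝ] (X →₀ ℝ) →ₗ[ℝ] ℝ :=
  Finsupp.linearCombination ℝ fun x => Finsupp.linearCombination ℝ (K x)

variable {K : X → X → ℝ}

lemma kernelForm_apply (u v : X →₀ ℝ) :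
    kernelForm K u v = u.sum fun x a => v.sum fun y b => a * (b * K x y) := by
  simp only [kernelForm, Finsupp.linearCombination_apply, Finsupp.sum, LinearMap.sum_apply,
    LinearMap.smul_apply, smul_eq_mul, mul_sum]

lemma kernelForm_single_single (x y : X) (a b : ℝ) :
    kernelForm K (Finsupp.single x a) (Finsupp.single y b) = a * (b * K x y) := by
  simp [kernelForm]

lemma kernelForm_comm (hK : ∀ x y, K x y = K y x) (u v : X →₀ ℝ) :
    kernelForm K u v = kernelForm K v u := by
  rw [kernelForm_apply, kernelForm_apply, Finsupp.sum_comm]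
  simp only [hK, mul_left_comm]

lemma mem_ker_kernelForm {u : X →₀ ℝ}
    (h : ∀ y, kernelForm K u (Finsupp.single y 1) = 0) : u ∈ LinearMap.ker (kernelForm K) :=
  LinearMap.mem_ker.2 <| Finsupp.lhom_ext' fun y => LinearMap.ext_ring <| h y

lemma kernelForm_eq_of_mem_supported {S : Set X} {c : ℝ} {r v : X →₀ ℝ}
    (hr : ∀ x ∈ S, kernelForm K r (Finsupp.single x 1) = c * r x)
    (hv : v ∈ Finsupp.supported ℝ ℝ S) :
    kernelForm K r v = c * v.sum fun x b => b * r x := by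
  have hcoord : ∀ x ∈ v.support, kernelForm K r (Finsupp.single x (v x)) = c * (v x * r x) := by
    intro x hx
    rw [← mul_one (v x), ← smul_eq_mul, ← Finsupp.smul_single, map_smul, hr x (hv hx), smul_eq_mul,
      smul_eq_mul]
    ring
  conv_lhs => rw [← v.sum_single]
  rw [Finsupp.sum, map_sum, sum_congr rfl hcoord, Finsupp.sum, mul_sum]

lemma posSemidef_of_kernelForm_nonneg (hK : ∀ x y, K x y = K y x)
    (h : ∀ u, 0 ≤ kernelForm K u u) : (Matrix.of K).PosSemidef := by
  refine ⟨Matrix.ext fun x y => hK y x, fun u => ?_⟩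
  refine (h u).trans_eq ?_
  rw [kernelForm_apply]
  refine Finsupp.sum_congr fun x _ => Finsupp.sum_congr fun y _ => ?_
  simp only [star_trivial, Matrix.of_apply]
  ring

end KernelForm

section Eigenkernel

variable {V : Type*} {G : SimpleGraph V} [G.LocallyFinite]

open scoped Classical in
/-- The neighbours of `v` that are farther from the root `o` than `v` is. -/
noncomputable def children (G : SimpleGraph V) [G.LocallyFinite] (o v : V) : Finset V :=
  {s ∈ G.neighborFinset v | G.dist o s = G.dist o v + 1}

lemma mem_children {o v s : V} :
    s ∈ children G o v ↔ G.Adj v s ∧ G.dist o s = G.dist o v + 1 := by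
  rw [children, mem_filter, G.mem_neighborFinset]

/-- The uniform probability weight on the children of `v`. -/
noncomputable def childMean (G : SimpleGraph V) [G.LocallyFinite] (o v : V) : V →₀ ℝ :=
  (#(children G o v) : ℝ)⁻¹ • ∑ s ∈ children G o v, Finsupp.single s 1

lemma childMean_mem_supported (o v : V) :
    childMean G o v ∈ Finsupp.supported ℝ ℝ {x | G.dist o x = G.dist o v + 1} :=
  Submodule.smul_mem _ _ <| Submodule.sum_mem _ fun _ hs =>
    Finsupp.single_mem_supported ℝ _ (mem_children.1 hs).2

variable {f : ℕ → ℝ}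

/-- All the children of `v` have the same distance to `x`, except for `x` itself if it is one of
them; so a combination of children with total weight `0` pairs with `x` through the identity. -/
lemma kernelForm_single_sub_childMean (hG : G.IsTree) {o v w x : V} (hw : w ∈ children G o v)
    (hx : G.dist o x ≤ G.dist o w) :
    kernelForm (fun x y => f (G.dist x y)) (Finsupp.single w 1 - childMean G o v)
        (Finsupp.single x 1) =
      (f 0 - f 2) * (Finsupp.single w 1 - childMean G o v : V →₀ ℝ) x := by
  have hchild : ∀ s ∈ children G o v,
      kernelForm (fun x y => f (G.dist x y)) (Finsupp.single s 1) (Finsupp.single x 1) =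
        f (G.dist x v + 1) + (f 0 - f 2) * Finsupp.single s (1 : ℝ) x := by
    intro s hs
    obtain ⟨hvs, hos⟩ := mem_children.1 hs
    rw [kernelForm_single_single, one_mul, one_mul]
    rcases eq_or_ne x s with rfl | hne
    · rw [G.dist_self, G.dist_comm, SimpleGraph.dist_eq_one_iff_adj.2 hvs, Finsupp.single_eq_same]
      ring
    · have hle : G.dist o x ≤ G.dist o s := hx.trans_eq ((mem_children.1 hw).2.trans hos.symm)
      rw [G.dist_comm, tree_dist_eq_add_one_of_dist_le hG hvs hos hle hne,
        Finsupp.single_eq_of_ne hne, mul_zero, add_zero]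
  have hcard : (#(children G o v) : ℝ) ≠ 0 := Nat.cast_ne_zero.2 (card_ne_zero_of_mem hw)
  simp only [childMean, map_sub, map_smul, map_sum, LinearMap.sub_apply, LinearMap.smul_apply,
    LinearMap.sum_apply, Finsupp.sub_apply, Finsupp.smul_apply, Finsupp.finsetSum_apply,
    sum_congr rfl hchild, hchild w hw, sum_add_distrib, sum_const, ← mul_sum, nsmul_eq_mul,
    smul_eq_mul]
  field_simp
  ring

/-- Modulo the radical, the sum over all neighbours of `v` is a multiple of `v`. -/
lemma childMean_mem_sup_ker (hG : G.IsTree) {c : ℝ}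
    (hf : ∀ v x, ∑ s ∈ G.neighborFinset v, f (G.dist s x) = c * f (G.dist v x)) (o v : V) :
    childMean G o v ∈ Finsupp.supported ℝ ℝ {x | G.dist o x ≤ G.dist o v} ⊔
      LinearMap.ker (kernelForm fun x y => f (G.dist x y)) := by
  classical
  refine Submodule.smul_mem _ _ ?_
  have hradical : ∑ s ∈ G.neighborFinset v, Finsupp.single s 1 - c • Finsupp.single v 1 ∈
      LinearMap.ker (kernelForm fun x y => f (G.dist x y)) := by
    refine mem_ker_kernelForm fun x => ?_
    simp only [map_sub, map_sum, map_smul, LinearMap.sub_apply, LinearMap.sum_apply,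
      LinearMap.smul_apply, kernelForm_single_single, one_mul, smul_eq_mul, hf, sub_self]
  have hcloser : ∀ s ∈ G.neighborFinset v \ children G o v, G.dist o s ≤ G.dist o v := by
    intro s hs
    rw [Finset.mem_sdiff, G.mem_neighborFinset, mem_children] at hs
    have := hG.dist_eq_dist_add_one_of_adj o hs.1
    grind
  have hball : c • Finsupp.single v 1 - ∑ s ∈ G.neighborFinset v \ children G o v,
      Finsupp.single s 1 ∈ Finsupp.supported ℝ ℝ {x | G.dist o x ≤ G.dist o v} :=
    Submodule.sub_mem _
      (Submodule.smul_mem _ _ (Finsupp.single_mem_supported ℝ _ (le_refl (G.dist o v))))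
      (Submodule.sum_mem _ fun s hs => Finsupp.single_mem_supported ℝ _ (hcloser s hs))
  convert Submodule.add_mem_sup hball hradical using 1
  have hsubset : children G o v ⊆ G.neighborFinset v := fun s hs =>
    (G.mem_neighborFinset v s).2 (mem_children.1 hs).1
  rw [← sum_sdiff hsubset]
  abel

lemma exists_mem_children (hG : G.Connected) {o w : V} {R : ℕ} (hw : G.dist o w = R + 1) :
    ∃ v, w ∈ children G o v ∧ G.dist o v = R := by
  have hne : o ≠ w := by
    rintro rfl
    simp at hw
  obtain ⟨v, hadj, hcloser⟩ := exists_closer_neighbor hG hne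
  exact ⟨v, mem_children.2 ⟨hadj.symm, hcloser.symm⟩, by omega⟩

lemma exists_add_eq_of_mem_supported_ball (hG : G.IsTree) {c : ℝ}
    (hf : ∀ v x, ∑ s ∈ G.neighborFinset v, f (G.dist s x) = c * f (G.dist v x)) {o : V} {R : ℕ}
    {u : V →₀ ℝ} (hu : u ∈ Finsupp.supported ℝ ℝ {x | G.dist o x ≤ R + 1}) :
    ∃ a ∈ Finsupp.supported ℝ ℝ {x | G.dist o x ≤ R} ⊔
        LinearMap.ker (kernelForm fun x y => f (G.dist x y)),
      ∃ r ∈ Finsupp.supported ℝ ℝ {x | G.dist o x = R + 1}, a + r = u ∧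
        ∀ x ∈ {x | G.dist o x ≤ R + 1},
          kernelForm (fun x y => f (G.dist x y)) r (Finsupp.single x 1) = (f 0 - f 2) * r x := by
  classical
  choose! parent hchild hdist using fun w => exists_mem_children hG.1 (o := o) (w := w) (R := R)
  let outer := u.filter fun x => G.dist o x = R + 1
  have houter : ∀ w ∈ outer.support, G.dist o w = R + 1 := fun w hw => by
    rw [Finsupp.support_filter, mem_filter] at hw
    exact hw.2
  let r := outer.sum fun w a => a • (Finsupp.single w 1 - childMean G o (parent w))
  refine ⟨u - r, ?_, r, ?_, sub_add_cancel u r, fun x hx => ?_⟩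
  · have hsplit : u - r = u.filter (fun x => ¬ G.dist o x = R + 1) +
        outer.sum fun w a => a • childMean G o (parent w) := by
      have hr : r = outer - outer.sum fun w a => a • childMean G o (parent w) := by
        simp only [r, smul_sub, Finsupp.sum_sub, Finsupp.smul_single_one, Finsupp.sum_single]
      rw [hr, sub_eq_iff_eq_add, add_add_sub_cancel, add_comm]
      exact (u.filter_add_filter_not _).symm
    rw [hsplit]
    refine Submodule.add_mem _ (Submodule.mem_sup_left fun x hx => ?_)
      (Submodule.sum_mem _ fun w hw => Submodule.smul_mem _ _ ?_)
    · rw [mem_coe, Finsupp.support_filter, mem_filter] at hx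
      exact Nat.le_of_lt_succ (lt_of_le_of_ne (hu hx.1) hx.2)
    · have := childMean_mem_sup_ker hG hf o (parent w)
      rwa [hdist w (houter w hw)] at this
  · refine Submodule.sum_mem _ fun w hw => Submodule.smul_mem _ _ <| Submodule.sub_mem _
      (Finsupp.single_mem_supported ℝ _ (houter w hw)) ?_
    have := childMean_mem_supported (G := G) o (parent w)
    rwa [hdist w (houter w hw)] at this
  · simp only [r, Finsupp.sum, map_sum, LinearMap.sum_apply, map_smul, LinearMap.smul_apply,
      Finsupp.finsetSum_apply, Finsupp.smul_apply, smul_eq_mul, mul_sum]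
    refine sum_congr rfl fun w hw => ?_
    rw [kernelForm_single_sub_childMean hG (hchild w (houter w hw))
      (le_of_le_of_eq hx (houter w hw).symm)]
    ring

lemma eigenkernel_nonneg_on_ball (hG : G.IsTree) (h0 : 0 ≤ f 0) (h2 : f 2 ≤ f 0) {c : ℝ}
    (hf : ∀ v x, ∑ s ∈ G.neighborFinset v, f (G.dist s x) = c * f (G.dist v x)) (o : V) (R : ℕ) :
    ∀ u ∈ Finsupp.supported ℝ ℝ {x | G.dist o x ≤ R},
      0 ≤ kernelForm (fun x y => f (G.dist x y)) u u := by
  induction R with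
  | zero =>
    intro u hu
    have hsupp : u.support ⊆ {o} := fun x hx =>
      mem_singleton.2 (hG.1.dist_eq_zero_iff.1 (Nat.le_zero.1 (hu hx))).symm
    rw [Finsupp.support_subset_singleton.1 hsupp, kernelForm_single_single, G.dist_self,
      ← mul_assoc]
    exact mul_nonneg (mul_self_nonneg _) h0
  | succ R ih =>
    intro u hu
    obtain ⟨a, ha, r, hr, rfl, hform⟩ := exists_add_eq_of_mem_supported_ball hG hf hu
    refine apply_self_nonneg_of_mem_sup_ker (kernelForm_comm fun x y => by rw [G.dist_comm])
      ih ha ?_ fun p hp => ?_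
    · rw [kernelForm_eq_of_mem_supported hform (Finsupp.supported_mono (fun x hx => hx.le) hr)]
      exact mul_nonneg (sub_nonneg.2 h2) (sum_nonneg fun x _ => mul_self_nonneg _)
    · rw [kernelForm_eq_of_mem_supported hform
        (Finsupp.supported_mono (fun x hx => Nat.le_succ_of_le hx) hp)]
      refine mul_eq_zero_of_right _ <| sum_eq_zero fun x hx => mul_eq_zero_of_right _ ?_
      by_contra hrx
      have hsphere : G.dist o x = R + 1 := hr (Finsupp.mem_support_iff.2 hrx)
      have hball : G.dist o x ≤ R := hp hx
      omega

lemma posSemidef_eigenkernel (hG : G.IsTree) (h0 : 0 ≤ f 0) (h2 : f 2 ≤ f 0) {c : ℝ}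
    (hf : ∀ v x, ∑ s ∈ G.neighborFinset v, f (G.dist s x) = c * f (G.dist v x)) :
    (Matrix.of fun x y => f (G.dist x y)).PosSemidef := by
  refine posSemidef_of_kernelForm_nonneg (fun x y => by rw [G.dist_comm]) fun u => ?_
  obtain ⟨o⟩ := hG.1.nonempty
  exact eigenkernel_nonneg_on_ball hG h0 h2 hf o (u.support.sup (G.dist o)) u fun x hx =>
    le_sup (f := G.dist o) hx

end Eigenkernel

lemma treeP_succ_succ {q : ℕ} (hq : q ≠ 0) (n : ℕ) (t : ℝ) :
    q * treeP q (n + 2) t + treeP q n t = (q + 1) * t * treeP q (n + 1) t := by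
  have : (q : ℝ) ≠ 0 := Nat.cast_ne_zero.2 hq
  rw [treeP]
  field_simp
  ring

lemma continuous_treeP (q : ℕ) : ∀ n, Continuous (treeP q n)
  | 0 => by
    simp only [funext fun x => treeP.eq_1 q x]
    exact continuous_const
  | 1 => by
    simp only [funext fun x => treeP.eq_2 q x]
    exact continuous_id
  | n + 2 => by
    have := continuous_treeP q n
    have := continuous_treeP q (n + 1)
    simp only [funext fun x => treeP.eq_3 q x n]
    fun_prop

lemma IsHomTree.posSemidef_treeP {V : Type} {G : SimpleGraph V} {q : ℕ} (h : IsHomTree G q)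
    (hq : q ≠ 0) {t : ℝ} (ht : |t| ≤ 1) :
    (Matrix.of fun x y => treeP q (G.dist x y) t).PosSemidef := by
  have := h.locallyFinite
  refine posSemidef_eigenkernel (f := fun n => treeP q n t) (c := (q + 1) * t) h.isTree
    zero_le_one ?_ fun v x => ?_
  · have hrec := treeP_succ_succ hq 0 t
    have hpos : (0 : ℝ) < q := Nat.cast_pos.2 (Nat.pos_of_ne_zero hq)
    have hsq : t ^ 2 ≤ 1 := (sq_le_one_iff_abs_le_one t).2 ht
    simp only [treeP] at hrec ⊢
    nlinarith
  · simp only [fun s => G.dist_comm (u := s) (v := x)]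
    rcases hm : G.dist x v with _ | m
    · obtain rfl := h.1.dist_eq_zero_iff.1 hm
      rw [sum_neighborFinset_dist_self h.isRegularOfDegree x fun n => treeP q n t]
      simp only [treeP, mul_one]
    · rw [tree_sum_neighborFinset_dist h.isTree h.isRegularOfDegree hm fun n => treeP q n t,
        treeP_succ_succ hq]

/-! ### Positive definite kernels -/

section PosSemidef

variable {X : Type*}

lemma posSemidef_prod {𝕜 ι : Type*} [RCLike 𝕜] (s : Finset ι) {K : ι → X → X → 𝕜}
    (hK : ∀ i ∈ s, (Matrix.of (K i)).PosSemidef) :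
    (Matrix.of fun x y => ∏ i ∈ s, K i x y).PosSemidef := by
  classical
  induction s using Finset.induction_on with
  | empty =>
    simp only [prod_empty]
    exact (Matrix.PosSemidef.one (n := Unit)).submatrix fun _ => ()
  | insert i s hi ih =>
    simp only [prod_insert hi]
    exact (hK i (mem_insert_self i s)).hadamard (ih fun j hj => hK j (mem_insert_of_mem hj))

lemma posSemidef_map_ofReal {n : Type*} [Finite n] {A : Matrix n n ℝ} (hA : A.PosSemidef) :
    (A.map ((↑) : ℝ → ℂ)).PosSemidef := by
  obtain ⟨m, v, rfl⟩ := Matrix.posSemidef_iff_eq_sum_vecMulVec.1 hA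
  convert Matrix.posSemidef_sum univ fun k _ =>
    Matrix.posSemidef_vecMulVec_self_star fun i => (v k i : ℂ) using 1
  ext
  simp [Matrix.sum_apply, Matrix.vecMulVec_apply]

namespace IsPDKernel

lemma of_posSemidef {K : X → X → ℝ} (hK : (Matrix.of K).PosSemidef) :
    IsPDKernel fun x y => (K x y : ℂ) := by
  intro n x z
  refine ((posSemidef_map_ofReal (hK.submatrix x)).dotProduct_mulVec_nonneg z).trans_eq ?_
  simp only [dotProduct, Matrix.mulVec, mul_sum]
  refine sum_congr rfl fun i _ => sum_congr rfl fun j _ => ?_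
  simp only [Pi.star_apply, Matrix.map_apply, Matrix.submatrix_apply, Matrix.of_apply,
    starRingEnd_apply]
  ring

lemma integral {Ω : Type*} [MeasurableSpace Ω] {μ : Measure Ω} {ψ : Ω → X → X → ℂ}
    (hψ : ∀ t, IsPDKernel (ψ t)) (hint : ∀ x y, Integrable (fun t => ψ t x y) μ) :
    IsPDKernel fun x y => ∫ t, ψ t x y ∂μ := by
  intro n x z
  have hterm : ∀ i j, Integrable (fun t => ψ t (x i) (x j) * (starRingEnd ℂ) (z i) * z j) μ :=
    fun i j => ((hint _ _).mul_const _).mul_const _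
  have hswap : ∑ i, ∑ j, (∫ t, ψ t (x i) (x j) ∂μ) * (starRingEnd ℂ) (z i) * z j =
      ∫ t, ∑ i, ∑ j, ψ t (x i) (x j) * (starRingEnd ℂ) (z i) * z j ∂μ := by
    rw [integral_finsetSum _ fun i _ => integrable_finsetSum _ fun j _ => hterm i j]
    refine sum_congr rfl fun i _ => ?_
    rw [integral_finsetSum _ fun j _ => hterm i j]
    simp only [integral_mul_const]
  rw [hswap]
  exact integral_nonneg fun t => hψ t n x z

end IsPDKernel

end PosSemidef

section CoordDist

variable {ι : Type*} {V : ι → Type*} {G : ∀ i, SimpleGraph (V i)}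

/-- The vector of coordinate distances in a product of graphs. -/
noncomputable def coordDist (G : ∀ i, SimpleGraph (V i)) (x y : ∀ i, V i) : ι → ℕ :=
  fun i => (G i).dist (x i) (y i)

lemma coordDist_self (x : ∀ i, V i) : coordDist G x x = 0 :=
  funext fun _ => SimpleGraph.dist_self

lemma coordDist_comm (x y : ∀ i, V i) : coordDist G x y = coordDist G y x :=
  funext fun _ => SimpleGraph.dist_comm

end CoordDist

section Product

variable {ι : Type*} [Fintype ι] {q : ι → ℕ} {V : ι → Type} {G : ∀ i, SimpleGraph (V i)}

lemma isPDKernel_prod_treeP (hq : ∀ i, q i ≠ 0) (h : ∀ i, IsHomTree (G i) (q i)) {t : ι → ℝ}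
    (ht : ∀ i, |t i| ≤ 1) :
    IsPDKernel fun x y => ((∏ i, treeP (q i) (coordDist G x y i) (t i) : ℝ) : ℂ) :=
  IsPDKernel.of_posSemidef <| posSemidef_prod univ fun i _ =>
    ((h i).posSemidef_treeP (hq i) (ht i)).submatrix fun x : (∀ i, V i) => x i

lemma isPDKernel_of_eq_integral_prod_treeP (hq : ∀ i, q i ≠ 0)
    (h : ∀ i, IsHomTree (G i) (q i)) {φ : (ι → ℕ) → ℂ} (μ : Measure (ι → Set.Icc (-1 : ℝ) 1))
    [IsFiniteMeasure μ]
    (hφ : ∀ n : ι → ℕ, φ n = ∫ t, ∏ i, ((treeP (q i) (n i) (t i : ℝ) : ℝ) : ℂ) ∂μ) :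
    IsPDKernel fun x y => φ (coordDist G x y) := by
  simp only [hφ, ← Complex.ofReal_prod]
  refine IsPDKernel.integral (fun t => isPDKernel_prod_treeP hq h fun i => abs_le.2 (t i).2)
    fun x y => ?_
  have hcont : Continuous fun t : ι → Set.Icc (-1 : ℝ) 1 =>
      ((∏ i, treeP (q i) (coordDist G x y i) (t i) : ℝ) : ℂ) :=
    Complex.continuous_ofReal.comp <| continuous_finsetProd _ fun i _ =>
      (continuous_treeP _ _).comp (continuous_subtype_val.comp (continuous_apply i))
  exact hcont.integrable_of_hasCompactSupport (HasCompactSupport.of_compactSpace _)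

end Product

/-! ### Archimedean cones -/

section ArchimedeanCone

open scoped NNReal

variable {A : Type*} [CommRing A] [Algebra ℝ A]

/-- A multiplicative convex cone `C` containing the nonnegative constants is Archimedean if every
element becomes a member of `C` after adding a large constant. -/
def IsArchimedeanCone (C : Subalgebra ℝ≥0 A) : Prop :=
  ∀ a, ∃ c : ℝ≥0, algebraMap ℝ≥0 A c + a ∈ C

variable {C : Subalgebra ℝ≥0 A}

lemma map_algebraMap_nnreal (L : A →ₗ[ℝ] ℝ) (c : ℝ≥0) :
    L (algebraMap ℝ≥0 A c) = c * L 1 := by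
  rw [Algebra.algebraMap_eq_smul_one, NNReal.smul_def, map_smul, smul_eq_mul]

lemma map_algebraMap_nnreal_mul (L : A →ₗ[ℝ] ℝ) (c : ℝ≥0) (a : A) :
    L (algebraMap ℝ≥0 A c * a) = c * L a := by
  rw [← Algebra.smul_def, NNReal.smul_def, map_smul, smul_eq_mul]

lemma IsArchimedeanCone.map_mul_eq_zero (hC : IsArchimedeanCone C) {L : A →ₗ[ℝ] ℝ}
    (hL : ∀ u ∈ C, 0 ≤ L u) {u : A} (hu : u ∈ C) (h0 : L u = 0) (a : A) : L (u * a) = 0 := by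
  have hle : ∀ b, 0 ≤ L (u * b) := by
    intro b
    obtain ⟨c, hc⟩ := hC b
    have := hL _ (C.mul_mem hu hc)
    rwa [mul_add, map_add, mul_comm u, map_algebraMap_nnreal_mul, h0, mul_zero, zero_add] at this
  have hneg := hle (-a)
  rw [mul_neg, map_neg] at hneg
  exact le_antisymm (by linarith) (hle a)

/-- The normalised linear functionals that are nonnegative on `C`, as functions on `A`: this gives
them the topology of pointwise convergence. -/
def coneStates (C : Subalgebra ℝ≥0 A) : Set (A → ℝ) :=
  {f | ∃ L : A →ₗ[ℝ] ℝ, f = L ∧ L 1 = 1 ∧ ∀ u ∈ C, 0 ≤ L u}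

lemma isClosed_coneStates : IsClosed (coneStates C) := by
  have heq : coneStates C = Set.range ((↑) : (A →ₗ[ℝ] ℝ) → A → ℝ) ∩ {f | f 1 = 1} ∩
      {f | ∀ u ∈ C, 0 ≤ f u} := by
    ext f
    constructor
    · rintro ⟨L, rfl, hone, hL⟩
      exact ⟨⟨⟨L, rfl⟩, hone⟩, hL⟩
    · rintro ⟨⟨⟨L, rfl⟩, hone⟩, hL⟩
      exact ⟨L, rfl, hone, hL⟩
  rw [heq]
  refine ((LinearMap.isClosed_range_coe A ℝ (RingHom.id ℝ)).inter
    (isClosed_eq (continuous_apply _) continuous_const)).inter ?_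
  simp only [Set.ofPred_forall]
  exact isClosed_biInter fun u _ => isClosed_le continuous_const (continuous_apply u)

lemma IsArchimedeanCone.isCompact_coneStates (hC : IsArchimedeanCone C) :
    IsCompact (coneStates C) := by
  choose c hc using hC
  have hbox := isCompact_univ_pi fun a => isCompact_Icc (a := -(c a : ℝ)) (b := c (-a))
  refine hbox.of_isClosed_subset isClosed_coneStates ?_
  rintro _ ⟨L, rfl, hone, hL⟩ a -
  have hlower := hL _ (hc a)
  have hupper := hL _ (hc (-a))
  rw [map_add, map_algebraMap_nnreal, hone] at hlower hupper
  rw [map_neg] at hupper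
  exact ⟨by linarith, by linarith⟩

lemma convex_coneStates : Convex ℝ (coneStates C) := by
  rintro _ ⟨L, rfl, hLone, hL⟩ _ ⟨M, rfl, hMone, hM⟩ a b ha hb hab
  refine ⟨a • L + b • M, rfl, ?_, fun u hu => ?_⟩
  · simpa only [LinearMap.add_apply, LinearMap.smul_apply, hLone, hMone, smul_eq_mul, mul_one]
  · exact add_nonneg (mul_nonneg ha (hL u hu)) (mul_nonneg hb (hM u hu))

lemma smul_comp_mulLeft_mem_coneStates {L : A →ₗ[ℝ] ℝ} (hL : ∀ u ∈ C, 0 ≤ L u) {u : A}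
    (hu : u ∈ C) (hpos : 0 < L u) :
    ⇑((L u)⁻¹ • (L ∘ₗ LinearMap.mulLeft ℝ u)) ∈ coneStates C := by
  refine ⟨_, rfl, ?_, fun a ha => mul_nonneg (inv_nonneg.2 hpos.le) (hL _ (C.mul_mem hu ha))⟩
  simp [hpos.ne']

/-- If `u` and `c - u` lie in `C`, then `L` is a convex combination of the normalisations of
`L (u * ·)` and `L ((c - u) * ·)`. -/
lemma IsArchimedeanCone.map_mul_of_mem_extremePoints_of_mem (hC : IsArchimedeanCone C)
    {L : A →ₗ[ℝ] ℝ} (hL : ⇑L ∈ (coneStates C).extremePoints ℝ) {u : A} (hu : u ∈ C) (a : A) :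
    L (u * a) = L u * L a := by
  obtain ⟨⟨L', hLL', hone, hnonneg⟩, hext⟩ := mem_extremePoints.1 hL
  obtain rfl := DFunLike.coe_injective hLL'
  obtain ⟨c, hv⟩ := hC (-u)
  set v := algebraMap ℝ≥0 A c + -u with hv_def
  have hadd : ∀ b, L (u * b) + L (v * b) = c * L b := fun b => by
    rw [← map_add, ← add_mul, show u + v = algebraMap ℝ≥0 A c by rw [hv_def]; ring,
      map_algebraMap_nnreal_mul]
  have hadd_one : L u + L v = c := by simpa only [mul_one, hone] using hadd 1
  rcases (hnonneg u hu).eq_or_lt with hu0 | hupos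
  · rw [hC.map_mul_eq_zero hnonneg hu hu0.symm, ← hu0, zero_mul]
  rcases (hnonneg v hv).eq_or_lt with hv0 | hvpos
  · have := hC.map_mul_eq_zero hnonneg hv hv0.symm a
    linear_combination hadd a - this - L a * hadd_one - L a * hv0
  have hcpos : (0 : ℝ) < c := by linarith
  have hseg : ⇑L ∈ openSegment ℝ ⇑((L u)⁻¹ • (L ∘ₗ LinearMap.mulLeft ℝ u))
      ⇑((L v)⁻¹ • (L ∘ₗ LinearMap.mulLeft ℝ v)) := by
    refine ⟨L u / c, L v / c, by positivity, by positivity, ?_, funext fun b => ?_⟩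
    · rw [← add_div, hadd_one, div_self hcpos.ne']
    · simp only [Pi.add_apply, Pi.smul_apply, LinearMap.smul_apply, LinearMap.comp_apply,
        LinearMap.mulLeft_apply, smul_eq_mul]
      field_simp
      exact hadd b
  have heq := congrFun (hext _ (smul_comp_mulLeft_mem_coneStates hnonneg hu hupos) _
    (smul_comp_mulLeft_mem_coneStates hnonneg hv hvpos) hseg).1 a
  exact (inv_mul_eq_iff_eq_mul₀ hupos.ne').1 heq

lemma IsArchimedeanCone.map_mul_of_mem_extremePoints (hC : IsArchimedeanCone C)
    {L : A →ₗ[ℝ] ℝ} (hL : ⇑L ∈ (coneStates C).extremePoints ℝ) (a b : A) :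
    L (a * b) = L a * L b := by
  obtain ⟨c, hc⟩ := hC a
  have := hC.map_mul_of_mem_extremePoints_of_mem hL hc b
  rw [add_mul, map_add, map_add, add_mul, map_algebraMap_nnreal_mul, map_algebraMap_nnreal] at this
  obtain ⟨L', hLL', hone, -⟩ := hL.1
  rw [← DFunLike.coe_injective hLL'] at hone
  linear_combination this + c * L b * hone

theorem IsArchimedeanCone.nonneg_of_forall_algHom (hC : IsArchimedeanCone C) {L : A →ₗ[ℝ] ℝ}
    (hL : ∀ u ∈ C, 0 ≤ L u) {a : A}
    (ha : ∀ χ : A →ₐ[ℝ] ℝ, (∀ u ∈ C, 0 ≤ χ u) → 0 ≤ χ a) : 0 ≤ L a := by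
  rcases (hL 1 C.one_mem).eq_or_lt with h0 | hpos
  · simpa using (hC.map_mul_eq_zero hL C.one_mem h0.symm a).ge
  have hsub : coneStates C ⊆ {f | 0 ≤ f a} := by
    rw [← closure_convexHull_extremePoints hC.isCompact_coneStates convex_coneStates]
    refine closure_minimal (convexHull_min (fun f hf => ?_) (fun f hf g hg s t hs ht _ => ?_))
      (isClosed_le continuous_const (continuous_apply a))
    · obtain ⟨χ, rfl, hone, hχ⟩ := hf.1
      exact ha (AlgHom.ofLinearMap χ hone (hC.map_mul_of_mem_extremePoints hf)) hχ
    · exact add_nonneg (mul_nonneg hs hf) (mul_nonneg ht hg)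
  have hnormalised := hsub (smul_comp_mulLeft_mem_coneStates hL C.one_mem hpos)
  refine nonneg_of_mul_nonneg_right (a := (L 1)⁻¹) ?_ (inv_pos.2 hpos)
  simpa using hnormalised

end ArchimedeanCone

/-! ### Polynomials on the cube -/

section CubeCone

open scoped NNReal

variable {A : Type*} [CommRing A] [Algebra ℝ A] {ι : Type*}

/-- The multiplicative convex cone generated by the nonnegative constants and the elements
`1 ± x i`, the inequalities defining the cube. -/
noncomputable def cubeCone (x : ι → A) : Subalgebra ℝ≥0 A :=
  Algebra.adjoin ℝ≥0 (Set.range (fun i => 1 + x i) ∪ Set.range (fun i => 1 - x i))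

lemma one_add_mem_cubeCone (x : ι → A) (i : ι) : 1 + x i ∈ cubeCone x :=
  Algebra.subset_adjoin (.inl ⟨i, rfl⟩)

lemma one_sub_mem_cubeCone (x : ι → A) (i : ι) : 1 - x i ∈ cubeCone x :=
  Algebra.subset_adjoin (.inr ⟨i, rfl⟩)

lemma mem_of_two_mul_mem {C : Subalgebra ℝ≥0 A} {a : A} (ha : 2 * a ∈ C) : a ∈ C := by
  have h := C.smul_mem ha (2⁻¹ : ℝ≥0)
  rwa [two_mul, ← two_nsmul, ← Nat.cast_smul_eq_nsmul ℝ≥0, smul_smul, Nat.cast_ofNat,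
    inv_mul_cancel₀ two_ne_zero, one_smul] at h

lemma isArchimedeanCone_cubeCone_X :
    IsArchimedeanCone (cubeCone (MvPolynomial.X : ι → MvPolynomial ι ℝ)) := by
  set C := cubeCone (MvPolynomial.X : ι → MvPolynomial ι ℝ)
  suffices h : ∀ p, ∃ c : ℝ≥0, algebraMap ℝ≥0 _ c + p ∈ C ∧ algebraMap ℝ≥0 _ c - p ∈ C from
    fun p => (h p).imp fun _ => And.left
  intro p
  induction p using MvPolynomial.induction_on with
  | C a =>
    have hconst : ∀ b : ℝ, 0 ≤ b → MvPolynomial.C b ∈ C := fun b hb => C.algebraMap_mem ⟨b, hb⟩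
    refine ⟨‖a‖₊, ?_, ?_⟩
    · simpa using hconst (|a| + a) (by linarith [neg_abs_le a])
    · simpa using hconst (|a| - a) (by linarith [le_abs_self a])
  | add p r hp hr =>
    obtain ⟨c, hcp, hcp'⟩ := hp
    obtain ⟨d, hdr, hdr'⟩ := hr
    refine ⟨c + d, ?_, ?_⟩
    · rw [map_add, add_add_add_comm]
      exact C.add_mem hcp hdr
    · rw [map_add, add_sub_add_comm]
      exact C.add_mem hcp' hdr'
  | mul_X p i hp =>
    obtain ⟨c, hcp, hcp'⟩ := hp
    have hplus := one_add_mem_cubeCone (MvPolynomial.X : ι → MvPolynomial ι ℝ) i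
    have hminus := one_sub_mem_cubeCone (MvPolynomial.X : ι → MvPolynomial ι ℝ) i
    refine ⟨c, mem_of_two_mul_mem ?_, mem_of_two_mul_mem ?_⟩
    · convert C.add_mem (C.mul_mem hcp hplus) (C.mul_mem hcp' hminus) using 1
      ring
    · convert C.add_mem (C.mul_mem hcp hminus) (C.mul_mem hcp' hplus) using 1
      ring

/-- Restriction of polynomials to the cube. -/
noncomputable def toCube (ι : Type*) : MvPolynomial ι ℝ →ₐ[ℝ] C(ι → Set.Icc (-1 : ℝ) 1, ℝ) :=
  MvPolynomial.aeval fun i => ⟨fun t => (t i : ℝ), by fun_prop⟩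

lemma toCube_apply (p : MvPolynomial ι ℝ) (t : ι → Set.Icc (-1 : ℝ) 1) :
    toCube ι p t = MvPolynomial.eval (fun i => (t i : ℝ)) p := by
  induction p using MvPolynomial.induction_on with
  | C a => simp [toCube]
  | add p r hp hr => rw [map_add, ContinuousMap.add_apply, hp, hr, map_add]
  | mul_X p i hp =>
    rw [map_mul, ContinuousMap.mul_apply, hp, map_mul, MvPolynomial.eval_X]
    simp [toCube]

theorem nonneg_of_toCube_nonneg {L : MvPolynomial ι ℝ →ₗ[ℝ] ℝ}
    (hL : ∀ u ∈ cubeCone MvPolynomial.X, 0 ≤ L u) {p : MvPolynomial ι ℝ} (hp : 0 ≤ toCube ι p) :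
    0 ≤ L p := by
  refine isArchimedeanCone_cubeCone_X.nonneg_of_forall_algHom hL fun χ hχ => ?_
  have hmem : ∀ i, χ (MvPolynomial.X i) ∈ Set.Icc (-1 : ℝ) 1 := by
    intro i
    have hplus := hχ _ (one_add_mem_cubeCone _ i)
    have hminus := hχ _ (one_sub_mem_cubeCone _ i)
    rw [map_add, map_one] at hplus
    rw [map_sub, map_one] at hminus
    exact ⟨by linarith, by linarith⟩
  have hχp : χ p = toCube ι p fun i => ⟨χ (MvPolynomial.X i), hmem i⟩ := by
    rw [toCube_apply, ← MvPolynomial.coe_aeval_eq_eval]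
    exact DFunLike.congr_fun (MvPolynomial.aeval_unique χ) p
  rw [hχp]
  exact hp _

end CubeCone

section RepresentingMeasure

variable {K : Type*} [TopologicalSpace K] [CompactSpace K]

lemma exists_nonneg_extension {E : Type*} [AddCommGroup E] [Module ℝ E] (T : E →ₗ[ℝ] C(K, ℝ))
    {e : E} (he : T e = 1) (L : E →ₗ[ℝ] ℝ) (hL : ∀ p, 0 ≤ T p → 0 ≤ L p) :
    ∃ g : C(K, ℝ) →ₗ[ℝ] ℝ, (∀ f, 0 ≤ f → 0 ≤ g f) ∧ ∀ p, g (T p) = L p := by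
  obtain ⟨s, hs⟩ := T.rangeRestrict.exists_rightInverse_of_surjective T.range_rangeRestrict
  have hTs : ∀ f, T (s f) = f := fun f => congrArg Subtype.val (LinearMap.congr_fun hs f)
  have hker : ∀ p, T p = 0 → L p = 0 := by
    intro p hp
    have hneg := hL (-p) (by rw [map_neg, hp, neg_zero])
    rw [map_neg] at hneg
    exact le_antisymm (by linarith) (hL p hp.ge)
  obtain ⟨g, hgT, hg⟩ := riesz_extension (PointedCone.positive ℝ C(K, ℝ))
    ⟨LinearMap.range T, L ∘ₗ s⟩
    (fun f hf => hL _ (by rw [hTs]; exact hf))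
    (fun f => by
      refine ⟨⟨T (‖f‖ • e), LinearMap.mem_range_self _ _⟩, fun t => ?_⟩
      have hft := (abs_le.1 (f.norm_coe_le_norm t)).1
      have hconst : T (‖f‖ • e) t = ‖f‖ := by simp [he]
      change 0 ≤ T (‖f‖ • e) t + f t
      linarith)
  refine ⟨g, fun f hf => hg f hf, fun p => ?_⟩
  have hgp : g (T p) = L (s ⟨T p, p, rfl⟩) := hgT ⟨T p, p, rfl⟩
  rw [hgp, ← sub_eq_zero, ← map_sub]
  exact hker _ (by rw [map_sub, hTs, sub_self])

lemma exists_measure_eq_integral [T2Space K] [MeasurableSpace K] [BorelSpace K]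
    (g : C(K, ℝ) →ₗ[ℝ] ℝ) (hg : ∀ f, 0 ≤ f → 0 ≤ g f) :
    ∃ μ : Measure K, IsFiniteMeasure μ ∧ ∀ f : C(K, ℝ), g f = ∫ t, f t ∂μ := by
  let Λ : CompactlySupportedContinuousMap K ℝ →ₚ[ℝ] ℝ :=
    PositiveLinearMap.mk₀
      { toFun := fun f => g f.toContinuousMap
        map_add' := fun f f' => map_add g f.toContinuousMap f'.toContinuousMap
        map_smul' := fun c f => map_smul g c f.toContinuousMap }
      fun f hf => hg _ hf
  exact ⟨RealRMK.rieszMeasure Λ, inferInstance, fun f =>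
    (RealRMK.integral_rieszMeasure Λ ⟨f, HasCompactSupport.of_compactSpace _⟩).symm⟩

theorem exists_measure_eq_integral_eval {ι : Type*} [Countable ι] {L : MvPolynomial ι ℝ →ₗ[ℝ] ℝ}
    (hL : ∀ u ∈ cubeCone MvPolynomial.X, 0 ≤ L u) :
    ∃ μ : Measure (ι → Set.Icc (-1 : ℝ) 1), IsFiniteMeasure μ ∧
      ∀ p, L p = ∫ t, MvPolynomial.eval (fun i => (t i : ℝ)) p ∂μ := by
  obtain ⟨g, hg, hgL⟩ := exists_nonneg_extension (toCube ι).toLinearMap (map_one (toCube ι)) L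
    fun _ => nonneg_of_toCube_nonneg hL
  obtain ⟨μ, hμ, hint⟩ := exists_measure_eq_integral g hg
  refine ⟨μ, hμ, fun p => ?_⟩
  rw [← hgL, hint]
  exact integral_congr_ae (.of_forall fun t => toCube_apply p t)

end RepresentingMeasure

/-! ### Functionals nonnegative on squares -/

section SquarePositive

open scoped NNReal

variable {A : Type*} [CommRing A] [Algebra ℝ A] {ι : Type*} {x : ι → A} {L : A →ₗ[ℝ] ℝ}

lemma sq_map_mul_le (hL : ∀ a, 0 ≤ L (a * a)) (a b : A) :
    L (a * b) ^ 2 ≤ L (a * a) * L (b * b) := by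
  refine LinearMap.BilinForm.apply_sq_le_of_symm ((LinearMap.mul ℝ A).compr₂ L) hL
    ⟨fun a b => ?_⟩ a b
  exact congrArg L (mul_comm a b)

/-- The supremum `S` of the `|a k|` satisfies `S ^ 2 ≤ b * S`. -/
lemma abs_le_of_sq_le_mul_succ {a : ℕ → ℝ} {b C : ℝ} (hb : 0 ≤ b)
    (hsq : ∀ k, a k ^ 2 ≤ b * a (k + 1)) (hC : ∀ k, |a k| ≤ C) (k : ℕ) : |a k| ≤ b := by
  set S := ⨆ k, |a k|
  have hle : ∀ k, |a k| ≤ S := le_ciSup (f := fun k => |a k|) ⟨C, by rintro _ ⟨k, rfl⟩; exact hC k⟩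
  have hsqrt : S ≤ √(b * S) := ciSup_le fun k => Real.abs_le_sqrt <|
    (hsq k).trans (mul_le_mul_of_nonneg_left ((le_abs_self _).trans (hle _)) hb)
  have hS : 0 ≤ S := (abs_nonneg _).trans (hle 0)
  rw [Real.le_sqrt hS (mul_nonneg hb hS)] at hsqrt
  refine (hle k).trans ?_
  rcases hS.eq_or_lt with hS0 | hSpos
  · rwa [← hS0]
  · exact le_of_mul_le_mul_right (by rwa [← sq]) hSpos

/-- Nonnegativity on squares, together with boundedness of the moments in each `x i`. For
polynomials and `x = MvPolynomial.X` these are the functionals given by measures on the cube. -/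
structure IsBoundedSquarePositive (x : ι → A) (L : A →ₗ[ℝ] ℝ) : Prop where
  map_mul_self_nonneg : ∀ a, 0 ≤ L (a * a)
  bounded_moments : ∀ a i, ∃ C : ℝ, ∀ m : ℕ, |L (x i ^ m * a)| ≤ C

namespace IsBoundedSquarePositive

lemma abs_map_mul_mul_self_le (h : IsBoundedSquarePositive x L) (i : ι) (a : A) :
    |L (x i * (a * a))| ≤ L (a * a) := by
  obtain ⟨C, hC⟩ := h.bounded_moments (a * a) i
  have hsq : ∀ k, L (x i ^ 2 ^ k * (a * a)) ^ 2 ≤ L (a * a) * L (x i ^ 2 ^ (k + 1) * (a * a)) := by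
    intro k
    have hcs := sq_map_mul_le h.map_mul_self_nonneg a (x i ^ 2 ^ k * a)
    rwa [mul_left_comm, mul_mul_mul_comm, ← pow_add, ← two_mul, ← pow_succ'] at hcs
  simpa using abs_le_of_sq_le_mul_succ (h.map_mul_self_nonneg a) hsq (fun k => hC (2 ^ k)) 0

lemma comp_mulLeft (h : IsBoundedSquarePositive x L) {u : A}
    (hu : ∀ a, 0 ≤ L (u * (a * a))) : IsBoundedSquarePositive x (L ∘ₗ LinearMap.mulLeft ℝ u) where
  map_mul_self_nonneg := hu
  bounded_moments a i := by
    simpa only [LinearMap.comp_apply, LinearMap.mulLeft_apply, mul_left_comm u] using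
      h.bounded_moments (u * a) i

lemma map_mul_mul_self_nonneg {u : A} (hu : u ∈ cubeCone x) :
    ∀ {L : A →ₗ[ℝ] ℝ}, IsBoundedSquarePositive x L → ∀ a, 0 ≤ L (u * (a * a)) := by
  induction hu using Algebra.adjoin_induction with
  | mem u hu =>
    intro L h a
    rcases hu with ⟨i, rfl⟩ | ⟨i, rfl⟩
    · have := (abs_le.1 (h.abs_map_mul_mul_self_le i a)).1
      rw [add_mul, one_mul, map_add]
      linarith
    · have := (abs_le.1 (h.abs_map_mul_mul_self_le i a)).2
      rw [sub_mul, one_mul, map_sub]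
      linarith
  | algebraMap c =>
    intro L h a
    rw [map_algebraMap_nnreal_mul]
    exact mul_nonneg c.2 (h.map_mul_self_nonneg a)
  | add u v _ _ ihu ihv =>
    intro L h a
    rw [add_mul, map_add]
    exact add_nonneg (ihu h a) (ihv h a)
  | mul u v _ _ ihu ihv =>
    intro L h a
    rw [mul_assoc]
    exact ihv (h.comp_mulLeft (ihu h)) a

theorem nonneg_of_mem_cubeCone (h : IsBoundedSquarePositive x L) {u : A} (hu : u ∈ cubeCone x) :
    0 ≤ L u := by
  simpa only [mul_one] using map_mul_mul_self_nonneg hu h 1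

end IsBoundedSquarePositive

end SquarePositive

/-! ### Averaging operators -/

open scoped IsMulCommutative in
/-- Evaluation of polynomials at a commuting family in a noncommutative algebra. -/
noncomputable def aevalOfCommute {R B ι : Type*} [CommRing R] [Ring B] [Algebra R B] (a : ι → B)
    (ha : ∀ i j, Commute (a i) (a j)) : MvPolynomial ι R →ₐ[R] B :=
  have : IsMulCommutative (Algebra.adjoin R (Set.range a)) :=
    Algebra.isMulCommutative_adjoin R (by
      rintro _ ⟨i, rfl⟩ _ ⟨j, rfl⟩
      exact ha i j)
  (Algebra.adjoin R (Set.range a)).val.comp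
    (MvPolynomial.aeval fun i => ⟨a i, Algebra.subset_adjoin (Set.mem_range_self i)⟩)

@[simp]
lemma aevalOfCommute_X {R B ι : Type*} [CommRing R] [Ring B] [Algebra R B] (a : ι → B)
    (ha : ∀ i j, Commute (a i) (a j)) (i : ι) :
    aevalOfCommute (R := R) a ha (MvPolynomial.X i) = a i := by
  simp [aevalOfCommute]

/-- The probability that the simple random walk on the `(q + 1)`-homogeneous tree steps away from
a base point at distance `m`. -/
noncomputable def stepUpProb (q m : ℕ) : ℝ := if m = 0 then 1 else q / (q + 1)

@[simp]
lemma stepUpProb_zero (q : ℕ) : stepUpProb q 0 = 1 := if_pos rfl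

@[simp]
lemma stepUpProb_succ (q m : ℕ) : stepUpProb q (m + 1) = q / (q + 1) := if_neg m.succ_ne_zero

lemma stepUpProb_mem_Icc (q m : ℕ) : stepUpProb q m ∈ Set.Icc (0 : ℝ) 1 := by
  cases m with
  | zero => simp
  | succ m =>
    rw [stepUpProb_succ]
    exact ⟨by positivity, div_le_one_of_le₀ (by linarith) (by positivity)⟩

section Averaging

variable {ι : Type*} [DecidableEq ι]

/-- Averaging over the neighbours in the `i`-th tree, as an operator on functions of the vector
`n` of distances. Where `n i - 1` is truncated, its coefficient vanishes. -/
noncomputable def averaging (q : ι → ℕ) (i : ι) : Module.End ℝ ((ι → ℕ) → ℝ) where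
  toFun F n := stepUpProb (q i) (n i) * F (Function.update n i (n i + 1)) +
    (1 - stepUpProb (q i) (n i)) * F (Function.update n i (n i - 1))
  map_add' F F' := by
    ext n
    simp only [Pi.add_apply]
    ring
  map_smul' c F := by
    ext n
    simp only [Pi.smul_apply, smul_eq_mul, RingHom.id_apply]
    ring

variable {q : ι → ℕ} {i : ι}

lemma averaging_apply (F : (ι → ℕ) → ℝ) (n : ι → ℕ) :
    averaging q i F n = stepUpProb (q i) (n i) * F (Function.update n i (n i + 1)) +
      (1 - stepUpProb (q i) (n i)) * F (Function.update n i (n i - 1)) := rfl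

lemma averaging_apply_of_eq_zero (F : (ι → ℕ) → ℝ) {n : ι → ℕ} (hn : n i = 0) :
    averaging q i F n = F (Function.update n i 1) := by
  simp [averaging_apply, hn]

lemma averaging_apply_of_eq_succ (F : (ι → ℕ) → ℝ) {n : ι → ℕ} {m : ℕ} (hn : n i = m + 1) :
    (q i + 1) * averaging q i F n =
      q i * F (Function.update n i (m + 2)) + F (Function.update n i m) := by
  simp only [averaging_apply, hn, stepUpProb_succ, Nat.add_sub_cancel]
  field_simp
  ring

lemma commute_averaging (i j : ι) : Commute (averaging q i) (averaging q j) := by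
  rcases eq_or_ne i j with rfl | hij
  · exact Commute.refl _
  ext F n
  simp only [Module.End.mul_apply, averaging_apply, Function.update_of_ne hij,
    Function.update_of_ne hij.symm, Function.update_comm hij]
  ring

lemma abs_averaging_le {F : (ι → ℕ) → ℝ} {C : ℝ} (hF : ∀ n, |F n| ≤ C) (n : ι → ℕ) :
    |averaging q i F n| ≤ C := by
  simp only [← Real.norm_eq_abs, ← mem_closedBall_zero_iff] at hF ⊢
  obtain ⟨h0, h1⟩ := stepUpProb_mem_Icc (q i) (n i)
  exact convex_closedBall (0 : ℝ) C (hF _) (hF _) h0 (sub_nonneg.2 h1) (add_sub_cancel _ _)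

lemma abs_averaging_pow_le {F : (ι → ℕ) → ℝ} {C : ℝ} (hF : ∀ n, |F n| ≤ C) (m : ℕ) (n : ι → ℕ) :
    |(averaging q i ^ m) F n| ≤ C := by
  induction m generalizing n with
  | zero => simpa using hF n
  | succ m ih =>
    rw [pow_succ', Module.End.mul_apply]
    exact abs_averaging_le ih n

/-- Evaluation of polynomials at the averaging operators. -/
noncomputable def averagingEval (q : ι → ℕ) :
    MvPolynomial ι ℝ →ₐ[ℝ] Module.End ℝ ((ι → ℕ) → ℝ) :=
  aevalOfCommute (averaging q) commute_averaging

@[simp]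
lemma averagingEval_X (i : ι) : averagingEval q (MvPolynomial.X i) = averaging q i :=
  aevalOfCommute_X _ _ i

/-- The functional `p ↦ (p(A) F)(0)`, where `A` is the family of averaging operators. -/
noncomputable def averagingFunctional (q : ι → ℕ) (F : (ι → ℕ) → ℝ) : MvPolynomial ι ℝ →ₗ[ℝ] ℝ :=
  LinearMap.proj 0 ∘ₗ LinearMap.applyₗ F ∘ₗ (averagingEval q).toLinearMap

lemma averagingFunctional_apply (F : (ι → ℕ) → ℝ) (p : MvPolynomial ι ℝ) :
    averagingFunctional q F p = averagingEval q p F 0 := rfl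

end Averaging

section Convolution

variable {ι : Type*} {q : ι → ℕ} {V : ι → Type} {G : ∀ i, SimpleGraph (V i)}
  [DecidableEq ι]

lemma coordDist_update (x y : ∀ i, V i) (i : ι) (s : V i) :
    coordDist G x (Function.update y i s) =
      Function.update (coordDist G x y) i ((G i).dist (x i) s) := by
  funext j
  rcases eq_or_ne j i with rfl | hj
  · simp [coordDist]
  · simp [coordDist, Function.update_of_ne hj]

lemma sum_neighborFinset_coordDist [∀ i, (G i).LocallyFinite] (h : ∀ i, IsHomTree (G i) (q i))
    (F : (ι → ℕ) → ℝ) (x y : ∀ i, V i) (i : ι) :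
    ∑ s ∈ (G i).neighborFinset (y i), F (coordDist G x (Function.update y i s)) =
      (q i + 1) * averaging q i F (coordDist G x y) := by
  simp only [coordDist_update]
  rcases hm : (G i).dist (x i) (y i) with _ | m
  · rw [averaging_apply_of_eq_zero F hm, ← (h i).1.dist_eq_zero_iff.1 hm]
    exact sum_neighborFinset_dist_self (h i).isRegularOfDegree (x i)
      fun m => F (Function.update (coordDist G x y) i m)
  · rw [averaging_apply_of_eq_succ F hm]
    exact tree_sum_neighborFinset_dist (h i).isTree (h i).isRegularOfDegree hm
      fun m => F (Function.update (coordDist G x y) i m)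

lemma exists_linearCombination_eq_averagingEval (h : ∀ i, IsHomTree (G i) (q i)) (o : ∀ i, V i)
    (p : MvPolynomial ι ℝ) :
    ∃ u : (∀ i, V i) →₀ ℝ, ∀ (F : (ι → ℕ) → ℝ) (x : ∀ i, V i),
      Finsupp.linearCombination ℝ (fun y => F (coordDist G x y)) u =
        averagingEval q p F (coordDist G x o) := by
  have := fun i => (h i).locallyFinite
  induction p using MvPolynomial.induction_on with
  | C c =>
    refine ⟨Finsupp.single o c, fun F x => ?_⟩
    rw [Finsupp.linearCombination_single, ← MvPolynomial.algebraMap_eq, AlgHom.commutes,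
      Module.algebraMap_end_apply, Pi.smul_apply]
  | add p p' hp hp' =>
    obtain ⟨u, hu⟩ := hp
    obtain ⟨u', hu'⟩ := hp'
    refine ⟨u + u', fun F x => ?_⟩
    rw [map_add, hu, hu', map_add]
    rfl
  | mul_X p i hp =>
    obtain ⟨u, hu⟩ := hp
    refine ⟨Finsupp.linearCombination ℝ (fun y => ((q i : ℝ) + 1)⁻¹ •
      ∑ s ∈ (G i).neighborFinset (y i), Finsupp.single (Function.update y i s) (1 : ℝ)) u,
      fun F x => ?_⟩
    rw [map_mul, averagingEval_X, Module.End.mul_apply, ← hu,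
      LinearMap.map_finsupp_linearCombination]
    congr 2
    funext y
    rw [Function.comp_apply, map_smul, map_sum, smul_eq_mul,
      inv_mul_eq_iff_eq_mul₀ (by positivity), ← sum_neighborFinset_coordDist h]
    simp only [Finsupp.linearCombination_single, one_smul]

end Convolution

/-! ### The measure of a positive definite function -/

namespace IsPDKernel

variable {X : Type*} {ψ : X → X → ℂ}

lemma nonneg_two_point (hψ : IsPDKernel ψ) (x y : X) (a : ℝ) :
    0 ≤ ψ x x + a * (ψ x y + ψ y x) + a ^ 2 * ψ y y := by
  refine (hψ 2 ![x, y] ![1, a]).trans_eq ?_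
  simp only [Fin.sum_univ_two, Matrix.cons_val_zero, Matrix.cons_val_one, map_one,
    Complex.conj_ofReal]
  ring

lemma im_eq_zero_of_symm (hψ : IsPDKernel ψ) {x y : X} (hxy : ψ x y = ψ y x) :
    (ψ x y).im = 0 := by
  have hplus := (Complex.nonneg_iff.1 (hψ.nonneg_two_point x y 1)).2
  have hminus := (Complex.nonneg_iff.1 (hψ.nonneg_two_point x y (-1))).2
  simp only [← hxy, Complex.ofReal_one, Complex.ofReal_neg, one_mul, neg_mul, one_pow, neg_sq,
    Complex.add_im, Complex.neg_im] at hplus hminus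
  linarith

lemma abs_re_le_of_symm (hψ : IsPDKernel ψ) {x y : X} (hxy : ψ x y = ψ y x) :
    |(ψ x y).re| ≤ ((ψ x x).re + (ψ y y).re) / 2 := by
  have hplus := (Complex.nonneg_iff.1 (hψ.nonneg_two_point x y 1)).1
  have hminus := (Complex.nonneg_iff.1 (hψ.nonneg_two_point x y (-1))).1
  simp only [← hxy, Complex.ofReal_one, Complex.ofReal_neg, one_mul, neg_mul, one_pow, neg_sq,
    Complex.add_re, Complex.neg_re] at hplus hminus
  exact abs_le.2 ⟨by linarith, by linarith⟩

lemma linearCombination_re_nonneg (hψ : IsPDKernel ψ) (u : X →₀ ℝ) :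
    0 ≤ Finsupp.linearCombination ℝ
      (fun x => Finsupp.linearCombination ℝ (fun y => (ψ x y).re) u) u := by
  let e := u.support.equivFin.symm
  have hre := (Complex.nonneg_iff.1 (hψ _ (fun i => e i) fun i => (u (e i) : ℂ))).1
  refine hre.trans_eq ?_
  simp only [Finsupp.linearCombination_apply, Finsupp.sum, smul_eq_mul, mul_sum]
  simp only [← Finset.sum_coe_sort u.support, ← e.sum_comp, Complex.re_sum]
  refine sum_congr rfl fun i _ => sum_congr rfl fun j _ => ?_
  simp only [Complex.conj_ofReal, Complex.re_mul_ofReal]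
  ring

end IsPDKernel

section TreePolynomials

open Polynomial

/-- `treeP q n` as a formal polynomial, to be evaluated at averaging operators. -/
noncomputable def treePoly (q : ℕ) : ℕ → ℝ[X]
  | 0 => 1
  | 1 => X
  | n + 2 => C (1 + 1 / (q : ℝ)) * X * treePoly q (n + 1) - C (1 / (q : ℝ)) * treePoly q n

lemma eval_treePoly (q : ℕ) (t : ℝ) (n : ℕ) : (treePoly q n).eval t = treeP q n t := by
  induction n using Nat.twoStepInduction with
  | zero => simp [treePoly, treeP]
  | one => simp [treePoly, treeP]
  | more n ih ih' => simp [treePoly, treeP, ih, ih']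

lemma eval_prod_treePoly {ι : Type*} [Fintype ι] (q n : ι → ℕ) (t : ι → ℝ) :
    MvPolynomial.eval t (∏ i, aeval (MvPolynomial.X i) (treePoly (q i) (n i))) =
      ∏ i, treeP (q i) (n i) (t i) := by
  rw [map_prod]
  refine prod_congr rfl fun i _ => ?_
  rw [← MvPolynomial.coe_aeval_eq_eval, RingHom.coe_coe, ← aeval_algHom_apply, MvPolynomial.aeval_X,
    coe_aeval_eq_eval, eval_treePoly]

variable {ι : Type*} [DecidableEq ι] {q : ι → ℕ}

lemma aeval_averaging_treePoly {i : ι} (hq : q i ≠ 0) (n : ℕ) (F : (ι → ℕ) → ℝ) {m : ι → ℕ}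
    (hm : m i = 0) :
    aeval (averaging q i) (treePoly (q i) n) F m = F (Function.update m i n) := by
  induction n using Nat.twoStepInduction generalizing F with
  | zero =>
    rw [Function.update_eq_self_iff.2 hm.symm, treePoly, map_one, Module.End.one_apply]
  | one => rw [treePoly, aeval_X, averaging_apply_of_eq_zero F hm]
  | more n ih ih' =>
    have hrec : aeval (averaging q i) (treePoly (q i) (n + 2)) F m =
        (1 + 1 / (q i : ℝ)) * averaging q i F (Function.update m i (n + 1)) -
          1 / (q i : ℝ) * F (Function.update m i n) := by
      rw [treePoly, mul_right_comm, mul_assoc, map_sub, map_mul, map_mul, map_mul, aeval_C, aeval_C,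
        aeval_X, ← ih' (averaging q i F), ← ih F]
      rfl
    have hstep := averaging_apply_of_eq_succ (q := q) F (n := Function.update m i (n + 1))
      (Function.update_self i _ m)
    simp only [Function.update_idem] at hstep
    have : (q i : ℝ) ≠ 0 := Nat.cast_ne_zero.2 hq
    rw [hrec]
    field_simp
    linear_combination hstep

lemma averagingEval_prod_treePoly (hq : ∀ i, q i ≠ 0) (n : ι → ℕ) (S : Finset ι)
    (F : (ι → ℕ) → ℝ) :
    averagingEval q (∏ i ∈ S, aeval (MvPolynomial.X i) (treePoly (q i) (n i))) F 0 =
      F (S.piecewise n 0) := by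
  induction S using Finset.induction_on generalizing F with
  | empty => simp
  | insert i S hi ih =>
    rw [prod_insert hi, mul_comm, map_mul, Module.End.mul_apply, ih, ← aeval_algHom_apply,
      averagingEval_X, aeval_averaging_treePoly (hq i) _ F (by simp [hi]), piecewise_insert]

lemma averagingFunctional_prod_treePoly [Fintype ι] (hq : ∀ i, q i ≠ 0) (n : ι → ℕ)
    (F : (ι → ℕ) → ℝ) :
    averagingFunctional q F (∏ i, aeval (MvPolynomial.X i) (treePoly (q i) (n i))) = F n := by
  rw [averagingFunctional_apply, averagingEval_prod_treePoly hq, piecewise_univ]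

end TreePolynomials

section MeasureOfPD

variable {ι : Type*} {q : ι → ℕ} {V : ι → Type} {G : ∀ i, SimpleGraph (V i)}
  {φ : (ι → ℕ) → ℂ}

lemma im_eq_zero_and_abs_re_le (hq : ∀ i, q i ≠ 0) (h : ∀ i, IsHomTree (G i) (q i))
    (hφ : IsPDKernel fun x y => φ (coordDist G x y)) (n : ι → ℕ) :
    (φ n).im = 0 ∧ |(φ n).re| ≤ (φ 0).re := by
  have := fun i => (h i).locallyFinite
  have := fun i => (h i).1.nonempty
  let o : ∀ i, V i := fun i => Classical.arbitrary (V i)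
  choose x hx using fun i => tree_exists_dist_eq (h i).isTree (h i).isRegularOfDegree
    (Nat.one_le_iff_ne_zero.2 (hq i)) (o i) (n i)
  have hdist : coordDist G o x = n := funext hx
  have hsymm : φ (coordDist G o x) = φ (coordDist G x o) := by rw [coordDist_comm]
  have him := hφ.im_eq_zero_of_symm hsymm
  have hre := hφ.abs_re_le_of_symm hsymm
  simp only [hdist, coordDist_self, add_self_div_two] at him hre
  exact ⟨him, hre⟩

lemma isBoundedSquarePositive_averagingFunctional [DecidableEq ι] (hq : ∀ i, q i ≠ 0)
    (h : ∀ i, IsHomTree (G i) (q i))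
    (hφ : IsPDKernel fun x y => φ (coordDist G x y)) :
    IsBoundedSquarePositive MvPolynomial.X
      (averagingFunctional q fun n => (φ n).re) := by
  have := fun i => (h i).1.nonempty
  let o : ∀ i, V i := fun i => Classical.arbitrary (V i)
  set F : (ι → ℕ) → ℝ := fun n => (φ n).re
  have hF : ∀ n, |F n| ≤ (φ 0).re := fun n => (im_eq_zero_and_abs_re_le hq h hφ n).2
  choose u hu using exists_linearCombination_eq_averagingEval h o
  have hu₀ : ∀ p (F : (ι → ℕ) → ℝ), averagingEval q p F 0 =
      Finsupp.linearCombination ℝ (fun y => F (coordDist G o y)) (u p) := fun p F => by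
    rw [hu, coordDist_self]
  refine ⟨fun p => ?_, fun p i => ?_⟩
  · rw [averagingFunctional_apply, map_mul, Module.End.mul_apply, hu₀]
    refine (hφ.linearCombination_re_nonneg (u p)).trans_eq ?_
    congr 2
    funext x
    rw [coordDist_comm, ← hu]
  · refine ⟨∑ y ∈ (u p).support, |u p y| * (φ 0).re, fun m => ?_⟩
    rw [averagingFunctional_apply, mul_comm, map_mul, map_pow, averagingEval_X,
      Module.End.mul_apply, hu₀, Finsupp.linearCombination_apply]
    refine (abs_sum_le_sum_abs _ _).trans (sum_le_sum fun y _ => ?_)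
    simp only [smul_eq_mul, abs_mul]
    exact mul_le_mul_of_nonneg_left (abs_averaging_pow_le hF m _) (abs_nonneg _)

theorem exists_measure_of_isPDKernel [Fintype ι] (hq : ∀ i, q i ≠ 0)
    (h : ∀ i, IsHomTree (G i) (q i))
    (hφ : IsPDKernel fun x y => φ (coordDist G x y)) :
    ∃ μ : Measure (ι → Set.Icc (-1 : ℝ) 1), IsFiniteMeasure μ ∧
      ∀ n : ι → ℕ,
        φ n = ∫ t, ∏ i, ((treeP (q i) (n i) (t i : ℝ) : ℝ) : ℂ) ∂μ := by
  classical
  obtain ⟨μ, hμ, hL⟩ := exists_measure_eq_integral_eval fun u hu =>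
    (isBoundedSquarePositive_averagingFunctional hq h hφ).nonneg_of_mem_cubeCone hu
  refine ⟨μ, hμ, fun n => ?_⟩
  have hre : (φ n).re = ∫ t, ∏ i, treeP (q i) (n i) (t i : ℝ) ∂μ := by
    simpa only [averagingFunctional_prod_treePoly hq, eval_prod_treePoly] using
      hL (∏ i, Polynomial.aeval (MvPolynomial.X i) (treePoly (q i) (n i)))
  simp only [← Complex.ofReal_prod, integral_complex_ofReal, ← hre]
  exact Complex.ext rfl (im_eq_zero_and_abs_re_le hq h hφ n).1

end MeasureOfPD

/-! ### Existence of homogeneous trees -/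

/-- At a vertex of a cycle where `ℓ` is maximal, both neighbours on the cycle are lower. -/
lemma isAcyclic_of_unique_lower_neighbor {V α : Type*} [LinearOrder α] {G : SimpleGraph V}
    (ℓ : V → α) (h : ∀ ⦃v s s'⦄, G.Adj v s → G.Adj v s' → ℓ s ≤ ℓ v → ℓ s' ≤ ℓ v → s = s') :
    G.IsAcyclic := by
  classical
  intro u c hc
  obtain ⟨m, hm, hmax⟩ := exists_max_image c.support.toFinset ℓ ⟨u, by simp⟩
  rw [List.mem_toFinset] at hm
  have hmax' : ∀ k, ℓ ((c.rotate m hm).getVert k) ≤ ℓ m := fun k =>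
    hmax _ <| List.mem_toFinset.2 <|
      (c.mem_support_rotate_iff m hm).1 ((c.rotate m hm).getVert_mem_support k)
  have hrot := hc.rotate hm
  exact hrot.snd_ne_penultimate <| h ((c.rotate m hm).adj_snd hrot.not_nil)
    ((c.rotate m hm).adj_penultimate hrot.not_nil).symm (hmax' _) (hmax' _)

/-- Words without two equal consecutive letters: the elements of the free product of copies of
`ℤ/2ℤ` indexed by the alphabet. -/
abbrev ReducedWord (α : Type*) : Type _ := {l : List α // l.IsChain (· ≠ ·)}

/-- The Cayley graph of the free product of copies of `ℤ/2ℤ` indexed by the alphabet: two reduced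
words are adjacent if one is the tail of the other. -/
def wordGraph (α : Type*) : SimpleGraph (ReducedWord α) where
  Adj u v := (∃ a, v.1 = a :: u.1) ∨ (∃ a, u.1 = a :: v.1)
  symm := ⟨fun _ _ h => h.symm⟩
  loopless := ⟨fun u h => by
    rcases h with ⟨a, h⟩ | ⟨a, h⟩ <;> simpa using congrArg List.length h⟩

namespace wordGraph

variable {α : Type*}

lemma exists_eq_cons_of_adj {u v : ReducedWord α} (h : (wordGraph α).Adj u v)
    (hle : v.1.length ≤ u.1.length) : ∃ a, u.1 = a :: v.1 := by
  refine h.resolve_left ?_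
  rintro ⟨a, ha⟩
  simp [ha] at hle

lemma isAcyclic : (wordGraph α).IsAcyclic := by
  refine isAcyclic_of_unique_lower_neighbor (fun u => u.1.length) fun v s s' hs hs' hle hle' => ?_
  obtain ⟨a, ha⟩ := exists_eq_cons_of_adj hs hle
  obtain ⟨b, hb⟩ := exists_eq_cons_of_adj hs' hle'
  exact Subtype.ext (List.cons.inj (ha.symm.trans hb)).2

lemma reachable_nil : ∀ (l : List α) (hl : l.IsChain (· ≠ ·)),
    (wordGraph α).Reachable ⟨[], List.isChain_nil⟩ ⟨l, hl⟩
  | [], _ => .refl _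
  | a :: l, hl =>
    have hadj : (wordGraph α).Adj ⟨l, hl.tail⟩ ⟨a :: l, hl⟩ := .inl ⟨a, rfl⟩
    (reachable_nil l hl.tail).trans hadj.reachable

lemma connected : (wordGraph α).Connected :=
  have : Nonempty (ReducedWord α) := ⟨⟨[], List.isChain_nil⟩⟩
  ⟨fun u v => (reachable_nil u.1 u.2).symm.trans (reachable_nil v.1 v.2)⟩

variable [DecidableEq α]

/-- Multiplication of a reduced word by a letter, on the side of its first letter. -/
def letterMul (a : α) (u : ReducedWord α) : ReducedWord α :=
  if h : u.1.head? = some a then ⟨u.1.tail, u.2.tail⟩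
  else ⟨a :: u.1, List.isChain_cons.2 ⟨by rintro _ hb rfl; exact h hb, u.2⟩⟩

lemma letterMul_eq_iff {a : α} {u v : ReducedWord α} :
    letterMul a u = v ↔ v.1 = a :: u.1 ∨ u.1 = a :: v.1 := by
  rw [letterMul]
  split_ifs with h
  · have hcons := List.cons_head?_tail h
    rw [Subtype.ext_iff]
    constructor
    · exact fun hv => .inr (hv ▸ hcons.symm)
    · rintro (hv | hu)
      · have hchain := v.2
        rw [hv, List.isChain_cons] at hchain
        exact absurd rfl (hchain.1 a h)
      · simp [hu]
  · rw [Subtype.ext_iff]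
    refine ⟨fun hv => .inl hv.symm, ?_⟩
    rintro (hv | hu)
    · exact hv.symm
    · simp [hu] at h

lemma neighborSet_eq_range (u : ReducedWord α) :
    (wordGraph α).neighborSet u = Set.range (letterMul · u) := by
  ext v
  simp only [Set.mem_range, letterMul_eq_iff, exists_or]
  rfl

lemma letterMul_left_injective (u : ReducedWord α) : Function.Injective (letterMul · u) := by
  intro a b hab
  rcases letterMul_eq_iff.1 hab with h | h <;>
    rcases letterMul_eq_iff.1 (rfl : letterMul b u = _) with h' | h'
  · exact (List.cons.inj (h.symm.trans h')).1
  · have hlen := congrArg List.length (h.trans (congrArg (a :: ·) h'))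
    simp only [List.length_cons] at hlen
    omega
  · have hlen := congrArg List.length (h.trans (congrArg (a :: ·) h'))
    simp only [List.length_cons] at hlen
    omega
  · exact (List.cons.inj (h.symm.trans h')).1

end wordGraph

lemma isHomTree_wordGraph (q : ℕ) : IsHomTree (wordGraph (Fin (q + 1))) q := by
  refine ⟨wordGraph.connected, wordGraph.isAcyclic, fun u => ?_⟩
  rw [wordGraph.neighborSet_eq_range, ← Set.image_univ,
    Set.ncard_image_of_injective _ (wordGraph.letterMul_left_injective u), Set.ncard_univ,
    Nat.card_fin]

theorem stmt_7_general {ι : Type*} [Fintype ι] {q : ι → ℕ} (hq : ∀ i, q i ≠ 0) {V : ι → Type}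
    {G : ∀ i, SimpleGraph (V i)} (h : ∀ i, IsHomTree (G i) (q i)) (φ : (ι → ℕ) → ℂ) :
    IsPDKernel (fun x y => φ (coordDist G x y))
      ↔ ∃ μ : Measure (ι → Set.Icc (-1 : ℝ) 1), IsFiniteMeasure μ ∧
          ∀ n : ι → ℕ, φ n = ∫ t, ∏ i, ((treeP (q i) (n i) (t i : ℝ) : ℝ) : ℂ) ∂μ :=
  ⟨exists_measure_of_isPDKernel hq h, fun ⟨μ, _, hφ⟩ =>
    isPDKernel_of_eq_integral_prod_treeP hq h μ hφ⟩

theorem stmt_7 (N : ℕ) (hN : 1 ≤ N) (q : Fin N → ℕ) (hq : ∀ i, 2 ≤ q i) (φ : ℕ → ℂ) :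
    (∀ (V : Fin N → Type) (G : ∀ i, SimpleGraph (V i)),
        (∀ i, IsHomTree (G i) (q i)) →
        IsPDKernel (fun x y : (∀ i, V i) => φ (∑ i, (G i).dist (x i) (y i))))
      ↔ ∃ μ : Measure (Fin N → Set.Icc (-1 : ℝ) 1), IsFiniteMeasure μ ∧
          ∀ n : Fin N → ℕ,
            φ (∑ i, n i) = ∫ t, ∏ i, ((treeP (q i) (n i) (t i : ℝ) : ℝ) : ℂ) ∂μ := by
  have hq₀ : ∀ i, q i ≠ 0 := fun i => (two_pos.trans_le (hq i)).ne'
  have hword := fun i => isHomTree_wordGraph (q i)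
  exact ⟨fun hφ => (stmt_7_general hq₀ hword fun n => φ (∑ i, n i)).1 (hφ _ _ hword),
    fun hμ V G h => (stmt_7_general hq₀ h fun n => φ (∑ i, n i)).2 hμ⟩
end

section
/- Let 2 ≤ q < ∞. The polynomials P_n^{(q)} satisfy: (a) |P_n^{(q)}(s)| ≤ 1 for all s ∈ [-1,1] and all n ∈ ℕ; (b) P_n^{(q)}(1) = 1 and P_n^{(q)}(−1) = (−1)^n for all n ∈ ℕ; (c) for every s ∈ (−1,1), lim_{n→∞} P_n^{(q)}(s) = 0. -/
/-!
Fix `s` with `s² < 1` and let `u` satisfy `u (n + 2) = (1 + a) s u (n + 1) - a u n`. The quadratic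
form `x² - 2 s x y + y²` can be written both as `(y - s x)² + (1 - s²) x²` and as
`(s y - x)² + (1 - s²) y²`, and the recurrence says that
`u (n + 2) - s u (n + 1) = a (s u (n + 1) - u n)`. Hence a step of the recurrence is a rotation
followed by multiplication of one coordinate by `a`, and the form evaluated at `(u n, u (n + 1))`
drops by exactly `(1 - a²) (s u (n + 1) - u n)²`. For `a² ≤ 1` this bounds `u`. For `a² < 1` the
form converges along `u`, so the drops tend to `0`; thus `s u (n + 1) - u n → 0`, then
`u (n + 1) - s u n → 0`, and these two combinations determine `(1 - s²) u n`.
For `s² = 1` and `u 0 = 1`, `u 1 = s` the solution is `u n = s ^ n`.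
-/

open MeasureTheory Filter Finset
open scoped ComplexOrder

/-- Solutions of the recurrence `u (n + 2) = (1 + a) s u (n + 1) - a u n`, which is the Chebyshev
recurrence for `a = 1` and that of the polynomials `P_n^{(q)}` at the point `s` for `a = 1 / q`. -/
def IsDampedChebyshev {R : Type*} [CommRing R] (a s : R) (u : ℕ → R) : Prop :=
  ∀ n, u (n + 2) = (1 + a) * s * u (n + 1) - a * u n

/-- The quadratic form `x² - 2 s x y + y²` at two consecutive terms `(u n, u (n + 1))`. It is
constant along solutions of the Chebyshev recurrence and serves as a Lyapunov function for the
damped one. -/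
def chebyshevEnergy {R : Type*} [CommRing R] (s : R) (u : ℕ → R) (n : ℕ) : R :=
  u n ^ 2 - 2 * s * u n * u (n + 1) + u (n + 1) ^ 2

section Energy

variable {R : Type*} [CommRing R] (s : R) (u : ℕ → R) (n : ℕ)

lemma chebyshevEnergy_eq_add_mul_sq :
    chebyshevEnergy s u n = (u (n + 1) - s * u n) ^ 2 + (1 - s ^ 2) * u n ^ 2 := by
  rw [chebyshevEnergy]
  ring

lemma chebyshevEnergy_eq_add_mul_succ_sq :
    chebyshevEnergy s u n = (s * u (n + 1) - u n) ^ 2 + (1 - s ^ 2) * u (n + 1) ^ 2 := by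
  rw [chebyshevEnergy]
  ring

lemma mul_sq_le_chebyshevEnergy [LinearOrder R] [IsStrictOrderedRing R] :
    (1 - s ^ 2) * u n ^ 2 ≤ chebyshevEnergy s u n := by
  rw [chebyshevEnergy_eq_add_mul_sq]
  exact le_add_of_nonneg_left (sq_nonneg _)

end Energy

namespace IsDampedChebyshev

section CommRing

variable {R : Type*} [CommRing R] {a s : R} {u : ℕ → R}

lemma sub_mul_succ (hu : IsDampedChebyshev a s u) (n : ℕ) :
    u (n + 2) - s * u (n + 1) = a * (s * u (n + 1) - u n) := by
  rw [hu n]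
  ring

lemma chebyshevEnergy_sub_succ (hu : IsDampedChebyshev a s u) (n : ℕ) :
    chebyshevEnergy s u n - chebyshevEnergy s u (n + 1) =
      (1 - a ^ 2) * (s * u (n + 1) - u n) ^ 2 := by
  rw [chebyshevEnergy_eq_add_mul_succ_sq s u n, chebyshevEnergy_eq_add_mul_sq s u (n + 1),
    hu.sub_mul_succ]
  ring

lemma eq_pow_of_sq_eq_one (hu : IsDampedChebyshev a s u) (h0 : u 0 = 1) (h1 : u 1 = s)
    (hs : s ^ 2 = 1) (n : ℕ) : u n = s ^ n := by
  induction n using Nat.twoStepInduction with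
  | zero => rw [h0, pow_zero]
  | one => rw [h1, pow_one]
  | more n ih0 ih1 =>
    rw [hu n, ih0, ih1]
    linear_combination a * s ^ n * hs

end CommRing

section Ordered

variable {R : Type*} [CommRing R] [LinearOrder R] [IsStrictOrderedRing R] {a s : R} {u : ℕ → R}

lemma antitone_chebyshevEnergy (hu : IsDampedChebyshev a s u) (ha : |a| ≤ 1) :
    Antitone (chebyshevEnergy s u) := by
  refine antitone_nat_of_succ_le fun n => sub_nonneg.1 ?_
  rw [hu.chebyshevEnergy_sub_succ]
  exact mul_nonneg (sub_nonneg.2 ((sq_le_one_iff_abs_le_one a).2 ha)) (sq_nonneg _)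

lemma mul_sq_le_chebyshevEnergy_zero (hu : IsDampedChebyshev a s u) (ha : |a| ≤ 1) (n : ℕ) :
    (1 - s ^ 2) * u n ^ 2 ≤ chebyshevEnergy s u 0 :=
  (mul_sq_le_chebyshevEnergy s u n).trans (hu.antitone_chebyshevEnergy ha n.zero_le)

lemma abs_le_one (hu : IsDampedChebyshev a s u) (ha : |a| ≤ 1) (hs : |s| ≤ 1) (h0 : u 0 = 1)
    (h1 : u 1 = s) (n : ℕ) : |u n| ≤ 1 := by
  rcases ((sq_le_one_iff_abs_le_one s).2 hs).lt_or_eq with hs_lt | hs_eq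
  · have energy_zero : chebyshevEnergy s u 0 = (1 - s ^ 2) * 1 := by
      rw [chebyshevEnergy, h0, h1]
      ring
    have h := hu.mul_sq_le_chebyshevEnergy_zero ha n
    rw [energy_zero] at h
    exact (sq_le_one_iff_abs_le_one _).1 (le_of_mul_le_mul_left h (sub_pos.2 hs_lt))
  · rw [hu.eq_pow_of_sq_eq_one h0 h1 hs_eq, abs_pow]
    exact pow_le_one₀ (abs_nonneg s) hs

end Ordered

section Real

variable {a s : ℝ} {u : ℕ → ℝ}

lemma tendsto_chebyshevEnergy_sub_succ (hu : IsDampedChebyshev a s u) (ha : |a| ≤ 1)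
    (hs : |s| ≤ 1) :
    Tendsto (fun n => chebyshevEnergy s u n - chebyshevEnergy s u (n + 1)) atTop (nhds 0) := by
  have bddBelow : BddBelow (Set.range (chebyshevEnergy s u)) := by
    refine ⟨0, Set.forall_mem_range.2 fun n => ?_⟩
    have hw : 0 ≤ 1 - s ^ 2 := sub_nonneg.2 ((sq_le_one_iff_abs_le_one s).2 hs)
    exact (mul_nonneg hw (sq_nonneg _)).trans (mul_sq_le_chebyshevEnergy s u n)
  have tendsto_energy := tendsto_atTop_ciInf (hu.antitone_chebyshevEnergy ha) bddBelow
  simpa only [sub_self] using tendsto_energy.sub ((tendsto_add_atTop_iff_nat 1).2 tendsto_energy)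

lemma tendsto_mul_succ_sub (hu : IsDampedChebyshev a s u) (ha : |a| < 1) (hs : |s| ≤ 1) :
    Tendsto (fun n => s * u (n + 1) - u n) atTop (nhds 0) := by
  have ha2 : 1 - a ^ 2 ≠ 0 := (sub_pos.2 ((sq_lt_one_iff_abs_lt_one a).2 ha)).ne'
  have tendsto_sq : Tendsto (fun n => (s * u (n + 1) - u n) ^ 2) atTop (nhds 0) := by
    have h := hu.tendsto_chebyshevEnergy_sub_succ ha.le hs
    simp only [hu.chebyshevEnergy_sub_succ] at h
    rwa [← tendsto_const_smul_iff₀ ha2, smul_zero]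
  rw [tendsto_zero_iff_abs_tendsto_zero]
  simpa only [Function.comp_def, Real.sqrt_sq_eq_abs, Real.sqrt_zero] using tendsto_sq.sqrt

lemma tendsto_succ_sub_mul (hu : IsDampedChebyshev a s u) (ha : |a| < 1) (hs : |s| ≤ 1) :
    Tendsto (fun n => u (n + 1) - s * u n) atTop (nhds 0) := by
  rw [← tendsto_add_atTop_iff_nat 1]
  simpa only [hu.sub_mul_succ, mul_zero] using (hu.tendsto_mul_succ_sub ha hs).const_mul a

theorem tendsto_zero (hu : IsDampedChebyshev a s u) (ha : |a| < 1) (hs : |s| < 1) :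
    Tendsto u atTop (nhds 0) := by
  have hw : 1 - s ^ 2 ≠ 0 := (sub_pos.2 ((sq_lt_one_iff_abs_lt_one s).2 hs)).ne'
  have tendsto_mul : Tendsto (fun n => (1 - s ^ 2) * u n) atTop (nhds 0) := by
    have h := ((hu.tendsto_succ_sub_mul ha hs.le).const_mul s).sub
      (hu.tendsto_mul_succ_sub ha hs.le)
    rw [mul_zero, sub_zero] at h
    exact h.congr fun n => by ring
  rwa [← tendsto_const_smul_iff₀ hw, smul_zero]

end Real

end IsDampedChebyshev

theorem stmt_14_general {a : ℝ} (ha : |a| < 1) {P : ℕ → ℝ → ℝ} (hP0 : ∀ s, P 0 s = 1)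
    (hP1 : ∀ s, P 1 s = s) (hP : ∀ s, IsDampedChebyshev a s fun n => P n s) :
    (∀ n : ℕ, ∀ s ∈ Set.Icc (-1 : ℝ) 1, |P n s| ≤ 1) ∧
    (∀ n : ℕ, P n 1 = 1 ∧ P n (-1) = (-1) ^ n) ∧
    (∀ s ∈ Set.Ioo (-1 : ℝ) 1, Tendsto (fun n => P n s) atTop (nhds 0)) := by
  refine ⟨fun n s hs => ?_, fun n => ⟨?_, ?_⟩, fun s hs => ?_⟩
  · exact (hP s).abs_le_one ha.le (abs_le.2 hs) (hP0 s) (hP1 s) n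
  · simpa only [one_pow] using (hP 1).eq_pow_of_sq_eq_one (hP0 1) (hP1 1) (one_pow 2) n
  · exact (hP (-1)).eq_pow_of_sq_eq_one (hP0 (-1)) (hP1 (-1)) neg_one_sq n
  · exact (hP s).tendsto_zero ha (abs_lt.2 hs)

theorem stmt_14 (q : ℕ) (hq : 2 ≤ q) :
    (∀ n : ℕ, ∀ s ∈ Set.Icc (-1 : ℝ) 1, |treeP q n s| ≤ 1) ∧
    (∀ n : ℕ, treeP q n 1 = 1 ∧ treeP q n (-1) = (-1)^n) ∧
    (∀ s ∈ Set.Ioo (-1 : ℝ) 1, Tendsto (fun n => treeP q n s) atTop (nhds 0)) := by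
  have hq1 : |1 / (q : ℝ)| < 1 := by
    rw [abs_of_nonneg (by positivity), one_div]
    exact inv_lt_one_of_one_lt₀ (Nat.one_lt_cast.2 hq)
  exact stmt_14_general hq1 (fun _ => rfl) (fun _ => rfl) fun _ _ => rfl
end

section
/- Let X be a median graph. Then R₊(T_∞) ⊆ R₊(X): every function φ : ℕ → ℂ such that the kernel (x,y) ↦ φ(d(x,y)) is positive definite on the homogeneous tree T_∞ of countably infinite degree also defines a positive definite kernel (x,y) ↦ φ(d(x,y)) on X. -/
/-!
Think of `φ n` as the `n`-th moment of a measure `μ`. Infinitely many lines of the tree `T_∞` pass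
through a given edge and share nothing else; testing positive definiteness on vectors averaged over
`m` of these lines and letting `m → ∞` shows that `(1 + x) μ` and `(1 - x) μ` are positive, that is,
`μ` is a positive measure on `[-1, 1]`. This positivity is inherited by the moments of `(1 ± x) μ`.

On a hypercube, the kernel `x ^ d` is a product over the coordinates, and its factor at a coordinate
is `((1 + x) ± (1 - x)) / 2`. Removing one coordinate at a time therefore replaces `μ` by
`(1 ± x) μ`, and `φ (d (x, y))` is positive definite on every hypercube.

A median graph embeds isometrically in a hypercube, with one coordinate for each pair of
complementary halfspaces. The point is that a halfspace is determined by any edge leaving it, so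
that each edge changes a single coordinate and a geodesic changes no coordinate twice.
-/

open MeasureTheory Filter Finset
open scoped ComplexOrder

/-- `G` is a median graph: connected, and for all vertices `x y z` the triple
intersection of intervals `I(x,y) ∩ I(y,z) ∩ I(z,x)` has exactly one element. -/
def IsMedianGraph {V : Type} (G : SimpleGraph V) : Prop :=
  G.Connected ∧ ∀ x y z : V, ∃! u : V,
    (G.dist x y = G.dist x u + G.dist u y ∧
     G.dist y z = G.dist y u + G.dist u z ∧
     G.dist z x = G.dist z u + G.dist u x)

open scoped symmDiff

/-! ### Positive definite kernels -/

namespace IsPDKernel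

variable {X Y : Type*} {ψ ψ' : X → X → ℂ}

lemma sum_nonneg (h : IsPDKernel ψ) {ι : Type*} [Fintype ι] (x : ι → X) (z : ι → ℂ) :
    0 ≤ ∑ i, ∑ j, ψ (x i) (x j) * (starRingEnd ℂ) (z i) * z j := by
  let e := (Fintype.equivFin ι).symm
  have h := h _ (x ∘ e) (z ∘ e)
  simp only [Function.comp_apply] at h
  rw [e.sum_comp fun i => ∑ j, ψ (x i) (x (e j)) * (starRingEnd ℂ) (z i) * z (e j)] at h
  convert h using 2 with i
  exact (e.sum_comp fun j => ψ (x i) (x j) * (starRingEnd ℂ) (z i) * z j).symm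

lemma comp (h : IsPDKernel ψ) (f : Y → X) : IsPDKernel fun x y => ψ (f x) (f y) :=
  fun n x z => h n (f ∘ x) z

lemma const {c : ℂ} (hc : 0 ≤ c) : IsPDKernel fun _ _ : X => c := by
  intro n x z
  have h : ∑ i, ∑ j, c * (starRingEnd ℂ) (z i) * z j = c * (star (∑ i, z i) * ∑ j, z j) := by
    rw [star_sum, sum_mul_sum, mul_sum]
    simp only [mul_sum, mul_assoc, starRingEnd_apply]
  rw [h]
  exact mul_nonneg hc (star_mul_self_nonneg _)

lemma add (h : IsPDKernel ψ) (h' : IsPDKernel ψ') : IsPDKernel fun x y => ψ x y + ψ' x y := by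
  intro n x z
  simpa only [add_mul, sum_add_distrib] using add_nonneg (h n x z) (h' n x z)

/-- Positive definiteness passes to the kernel that `ψ` induces on the finite combinations
`∑ b, w b y • δ (e b y)` of points, indexed by `y`. -/
lemma sum_sum (h : IsPDKernel ψ) {β : Type*} [Fintype β] (e : β → Y → X) (w : β → Y → ℂ) :
    IsPDKernel fun x y => ∑ b, ∑ b', (starRingEnd ℂ) (w b x) * w b' y * ψ (e b x) (e b' y) := by
  intro n x z
  have h := h.sum_nonneg (fun s : Fin n × β => e s.2 (x s.1)) (fun s => w s.2 (x s.1) * z s.1)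
  simp only [Fintype.sum_prod_type] at h
  convert h using 2 with i
  simp only [sum_mul]
  rw [sum_comm]
  refine sum_congr rfl fun b _ => sum_congr rfl fun j _ => sum_congr rfl fun b' _ => ?_
  rw [map_mul]
  ring

lemma conj_mul_mul (h : IsPDKernel ψ) (w : X → ℂ) :
    IsPDKernel fun x y => (starRingEnd ℂ) (w x) * w y * ψ x y := by
  simpa using h.sum_sum (fun (_ : Unit) x => x) fun _ => w

lemma of_two_mul (h : IsPDKernel fun x y => 2 * ψ x y) : IsPDKernel ψ := by
  intro n x z
  have h := mul_nonneg (inv_nonneg.2 zero_le_two : (0 : ℂ) ≤ 2⁻¹) (h n x z)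
  simpa only [mul_assoc, ← mul_sum, inv_mul_cancel_left₀ (two_ne_zero' ℂ)] using h

lemma of_tendsto {α : Type*} {l : Filter α} [l.NeBot] {K : α → X → X → ℂ}
    (hK : ∀ᶠ a in l, IsPDKernel (K a))
    (hlim : ∀ x y, Tendsto (fun a => K a x y) l (nhds (ψ x y))) : IsPDKernel ψ := by
  intro n x z
  refine ge_of_tendsto (tendsto_finsetSum _ fun i _ => tendsto_finsetSum _ fun j _ =>
    ((hlim (x i) (x j)).mul_const _).mul_const _) ?_
  filter_upwards [hK] with a ha using ha n x z

/-- Averaging over `m` copies of each point of `Y` leaves only a proportion `1 / m` of pairs in the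
same copy, so in the limit only the kernel between distinct copies remains. -/
lemma of_copies (h : IsPDKernel ψ) (e : ℕ → Y → X) {A B : Y → Y → ℂ}
    (hA : ∀ i j, i ≠ j → ∀ s t, ψ (e i s) (e j t) = A s t)
    (hB : ∀ i s t, ψ (e i s) (e i t) = B s t) : IsPDKernel A := by
  have average : ∀ᶠ m : ℕ in atTop, IsPDKernel fun s t => A s t + (B s t - A s t) / m := by
    filter_upwards [eventually_ne_atTop 0] with m hm
    convert h.sum_sum (fun (i : Fin m) s => e i s) (fun _ _ => (m : ℂ)⁻¹) with s t
    have entry : ∀ i j : Fin m,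
        ψ (e i s) (e j t) = A s t + if i = j then B s t - A s t else 0 := by
      intro i j
      split_ifs with hij
      · rw [hij, hB, add_sub_cancel]
      · rw [hA i j (Fin.val_ne_of_ne hij), add_zero]
    simp only [entry, ← mul_sum, sum_add_distrib, sum_ite_eq, mem_univ, if_true, sum_const,
      card_univ, Fintype.card_fin, nsmul_eq_mul, map_inv₀, map_natCast]
    have : (m : ℂ) ≠ 0 := Nat.cast_ne_zero.2 hm
    field_simp
  refine of_tendsto average fun s t => ?_
  simpa using tendsto_const_nhds.add (tendsto_const_div_atTop_nhds_zero_nat (B s t - A s t))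

end IsPDKernel

/-! ### Moment sequences and the hypercube -/

/-- The sequence `ψ n + ε ψ (n + 1)`. If `ψ` is the moment sequence of a measure `μ`, this is the
moment sequence of `(1 + ε x) μ`. -/
def signedShift (ε : ℤˣ) (ψ : ℕ → ℂ) (n : ℕ) : ℂ := ψ n + ε * ψ (n + 1)

/-- The positivity characterising the moment sequences of positive measures on `[-1, 1]`: the
Hankel kernels of the sequences representing `(1 + x) μ` and `(1 - x) μ` are positive definite. -/
def IsMomentPositive (ψ : ℕ → ℂ) : Prop :=
  ∀ ε : ℤˣ, IsPDKernel fun k l => signedShift ε ψ (k + l)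

lemma IsPDKernel.signedShift_signedShift {ψ : ℕ → ℂ} (h : IsPDKernel fun k l => ψ (k + l))
    (ε : ℤˣ) : IsPDKernel fun k l => signedShift ε (signedShift ε ψ) (k + l) := by
  convert h.sum_sum (fun (b : Bool) k => if b then k + 1 else k) (fun b _ => if b then ε else 1)
    using 3 with k l
  rcases Int.units_eq_one_or ε with rfl | rfl <;>
    simp [signedShift, add_assoc, add_left_comm, add_comm]

namespace IsMomentPositive

variable {ψ : ℕ → ℂ}

lemma isPDKernel_add (h : IsMomentPositive ψ) : IsPDKernel fun k l => ψ (k + l) := by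
  refine .of_two_mul ?_
  convert (h 1).add (h (-1)) using 3
  simp [signedShift]
  ring

lemma apply_zero_nonneg (h : IsMomentPositive ψ) : 0 ≤ ψ 0 := by
  simpa using h.isPDKernel_add 1 0 1

lemma signedShift (h : IsMomentPositive ψ) (ε : ℤˣ) : IsMomentPositive (signedShift ε ψ) := by
  intro δ
  rcases eq_or_ne δ ε with rfl | hδ
  · exact h.isPDKernel_add.signedShift_signedShift δ
  · obtain rfl := Int.units_ne_iff_eq_neg.1 hδ
    -- `2 (1 - x ^ 2) = (1 + ε x) ^ 2 (1 - ε x) + (1 - ε x) ^ 2 (1 + ε x)`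
    refine .of_two_mul ?_
    convert ((h (-ε)).signedShift_signedShift ε).add ((h ε).signedShift_signedShift (-ε)) using 3
    rcases Int.units_eq_one_or ε with rfl | rfl <;> simp [_root_.signedShift] <;> ring

end IsMomentPositive

section Hypercube

variable {ι : Type*} [DecidableEq ι]

/-- The `i`-th coordinate of a vertex `S` of the hypercube, as a sign. -/
def coordSign (i : ι) (S : Finset ι) : ℂ := if i ∈ S then -1 else 1

/-- Adding the coordinate `i` multiplies the kernel by `x ^ [i ∈ S ∆ T]`, which equals
`((1 + x) ± (1 - x)) / 2` with the sign `coordSign i S * coordSign i T`. -/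
lemma two_mul_apply_card_inter_insert (ψ : ℕ → ℂ) {F : Finset ι} {i : ι} (hi : i ∉ F)
    (S T : Finset ι) :
    2 * ψ #((S ∆ T) ∩ insert i F) = signedShift 1 ψ #((S ∆ T) ∩ F) +
      (starRingEnd ℂ) (coordSign i S) * coordSign i T * signedShift (-1) ψ #((S ∆ T) ∩ F) := by
  have hi' : i ∉ (S ∆ T) ∩ F := fun h => hi (mem_inter.1 h).2
  by_cases hS : i ∈ S <;> by_cases hT : i ∈ T <;>
    simp [mem_symmDiff, hS, hT, hi', signedShift, coordSign] <;> ring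

lemma IsMomentPositive.isPDKernel_card_symmDiff_inter {ψ : ℕ → ℂ} (hψ : IsMomentPositive ψ)
    (F : Finset ι) : IsPDKernel fun S T : Finset ι => ψ #((S ∆ T) ∩ F) := by
  induction F using Finset.induction_on generalizing ψ with
  | empty => simpa using IsPDKernel.const hψ.apply_zero_nonneg
  | insert i F hi ih =>
    refine .of_two_mul ?_
    simp only [two_mul_apply_card_inter_insert ψ hi]
    exact (ih (hψ.signedShift 1)).add ((ih (hψ.signedShift (-1))).conj_mul_mul (coordSign i))

lemma IsMomentPositive.isPDKernel_card_symmDiff {ψ : ℕ → ℂ} (hψ : IsMomentPositive ψ) :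
    IsPDKernel fun S T : Finset ι => ψ #(S ∆ T) := by
  intro n S z
  have hF : ∀ i j, (S i ∆ S j) ∩ univ.biUnion S = S i ∆ S j := fun i j =>
    inter_eq_left.2 (symmDiff_le_sup.trans
      (union_subset (subset_biUnion_of_mem S (mem_univ i)) (subset_biUnion_of_mem S (mem_univ j))))
  simpa only [hF] using hψ.isPDKernel_card_symmDiff_inter (univ.biUnion S) n S z

end Hypercube

/-! ### The homogeneous tree -/

lemma abs_sub_le_dist_of_adj {V : Type*} {G : SimpleGraph V} (hG : G.Connected) {f : V → ℤ}
    (hf : ∀ x y, G.Adj x y → |f x - f y| ≤ 1) (x y : V) : |f x - f y| ≤ G.dist x y := by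
  obtain ⟨p, hp⟩ := hG.exists_walk_length_eq_dist x y
  rw [← hp]
  clear hp
  induction p with
  | nil => simp
  | @cons x x' y h p ih =>
    have := abs_sub_le (f x) (f x') (f y)
    have := hf x x' h
    simp only [SimpleGraph.Walk.length_cons, Nat.cast_add, Nat.cast_one]
    linarith

/-- The homogeneous tree of countably infinite degree, on the finite words over `ℕ`: the parent of a
nonempty word is its tail. Hence the descendants of `s` are the words with suffix `s`. -/
def wordTree : SimpleGraph (List ℕ) where
  Adj s t := (∃ a, t = a :: s) ∨ ∃ a, s = a :: t
  symm := ⟨fun _ _ h => h.symm⟩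
  loopless := ⟨by rintro s (⟨a, h⟩ | ⟨a, h⟩) <;> simpa using congrArg List.length h⟩

namespace wordTree

lemma adj_cons (a : ℕ) (s : List ℕ) : wordTree.Adj (a :: s) s := Or.inr ⟨a, rfl⟩

lemma reachable_append (u s : List ℕ) : wordTree.Reachable (u ++ s) s := by
  induction u with
  | nil => exact .refl _
  | cons a u ih => exact (adj_cons a (u ++ s)).reachable.trans ih

lemma connected : wordTree.Connected := by
  have h : ∀ u, wordTree.Reachable u [] := fun u => by simpa using reachable_append u []
  exact ⟨fun u v => (h u).trans (h v).symm⟩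

lemma suffix_cons_iff_of_ne {a b : ℕ} {s t : List ℕ} (h : b :: t ≠ a :: s) :
    (a :: s) <:+ (b :: t) ↔ (a :: s) <:+ t := by
  rw [List.suffix_cons_iff, or_iff_right h.symm]

lemma isBridge_cons (a : ℕ) (s : List ℕ) : wordTree.IsBridge s(a :: s, s) := by
  rw [SimpleGraph.isBridge_iff]
  rintro ⟨p⟩
  have suffix_iff : ∀ {x y : List ℕ},
      (wordTree \ SimpleGraph.fromEdgeSet {s(a :: s, s)}).Walk x y →
        ((a :: s) <:+ x ↔ (a :: s) <:+ y) := by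
    intro x y p
    induction p with
    | nil => rfl
    | @cons x x' y h p ih =>
      rw [← ih]
      obtain ⟨⟨b, rfl⟩ | ⟨b, rfl⟩, h⟩ := h
      · exact (suffix_cons_iff_of_ne fun h' => h (by simp_all [Sym2.eq_swap])).symm
      · exact suffix_cons_iff_of_ne fun h' => h (by simp_all)
  simpa using ((suffix_iff p).1 List.suffix_rfl).length_le

lemma isAcyclic : wordTree.IsAcyclic := by
  rw [SimpleGraph.isAcyclic_iff_forall_adj_isBridge]
  rintro x y (⟨a, rfl⟩ | ⟨a, rfl⟩)
  · rw [Sym2.eq_swap]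
    exact isBridge_cons a x
  · exact isBridge_cons a y

lemma isInfTree : IsInfTree wordTree := by
  refine ⟨connected, isAcyclic, fun s => ⟨Set.to_countable _, ?_⟩⟩
  exact Set.infinite_of_injective_forall_mem (f := fun a => a :: s)
    (fun a b h => List.head_eq_of_cons_eq h) fun a => (adj_cons a s).symm

lemma dist_append_le (u s : List ℕ) : wordTree.dist (u ++ s) s ≤ u.length := by
  induction u with
  | nil => simp
  | cons a u ih =>
    have := connected.dist_triangle (u := a :: (u ++ s)) (v := u ++ s) (w := s)
    have := SimpleGraph.dist_eq_one_iff_adj.2 (adj_cons a (u ++ s))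
    simp only [List.cons_append, List.length_cons]
    omega

/-- The depth of `t` relative to `s`, counted positively on the branch at `s` through `a :: s` and
negatively off it. -/
def signedDepth (a : ℕ) (s t : List ℕ) : ℤ :=
  if (a :: s) <:+ t then t.length - s.length else s.length - t.length

lemma abs_signedDepth_sub_le_dist (a : ℕ) (s x y : List ℕ) :
    |signedDepth a s x - signedDepth a s y| ≤ wordTree.dist x y := by
  have step : ∀ b t, |signedDepth a s (b :: t) - signedDepth a s t| ≤ 1 := by
    intro b t
    by_cases h : b :: t = a :: s
    · obtain ⟨rfl, rfl⟩ := List.cons_eq_cons.1 h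
      have : ¬ (b :: t) <:+ t := fun h => by simpa using h.length_le
      simp [signedDepth, this]
    · by_cases ht : (a :: s) <:+ t <;>
        simp [signedDepth, suffix_cons_iff_of_ne h, ht]
  refine abs_sub_le_dist_of_adj connected ?_ x y
  rintro x y (⟨b, rfl⟩ | ⟨b, rfl⟩)
  · rw [abs_sub_comm]
    exact step b x
  · exact step b y

lemma length_add_length_le_dist {u v s : List ℕ} {a : ℕ} (hu : [a] <:+ u) (hv : ¬ [a] <:+ v) :
    u.length + v.length ≤ wordTree.dist (u ++ s) (v ++ s) := by
  have hu' : (a :: s) <:+ u ++ s := by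
    simpa using List.suffix_append_self_iff (l₃ := s) |>.2 hu
  have hv' : ¬ (a :: s) <:+ v ++ s := by
    simpa using List.suffix_append_self_iff (l₃ := s) |>.not.2 hv
  have := (le_abs_self _).trans (abs_signedDepth_sub_le_dist a s (u ++ s) (v ++ s))
  simp only [signedDepth, hu', hv', if_true, if_false, List.length_append] at this
  omega

lemma dist_append_append {u v s : List ℕ} (h : ∀ a, [a] <:+ u → ¬ [a] <:+ v) :
    wordTree.dist (u ++ s) (v ++ s) = u.length + v.length := by
  refine le_antisymm ?_ ?_
  · calc wordTree.dist (u ++ s) (v ++ s)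
        ≤ wordTree.dist (u ++ s) s + wordTree.dist s (v ++ s) := connected.dist_triangle
      _ ≤ u.length + v.length := by
        rw [SimpleGraph.dist_comm (u := s)]
        exact add_le_add (dist_append_le u s) (dist_append_le v s)
  · rcases List.eq_nil_or_concat' u with rfl | ⟨u, a, rfl⟩
    · rcases List.eq_nil_or_concat' v with rfl | ⟨v, b, rfl⟩
      · simp
      · rw [SimpleGraph.dist_comm, add_comm]
        exact length_add_length_le_dist ⟨v, rfl⟩ (by simp)
    · exact length_add_length_le_dist ⟨u, rfl⟩ (h a ⟨u, rfl⟩)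

/-- The vertices of the `j`-th of infinitely many lines through the edge between `[]` and `[0]`:
the one at depth `t.1` on the side of `[]` or of `[0]`, according to `t.2`. -/
def linePoint (j : ℕ) (t : ℕ × Bool) : List ℕ :=
  List.replicate t.1 (j + 1) ++ if t.2 then [0] else []

lemma eq_of_singleton_suffix_replicate {a b k : ℕ} (h : [a] <:+ List.replicate k b) : a = b :=
  List.eq_of_mem_replicate (h.subset (List.mem_singleton_self a))

lemma dist_linePoint_of_snd_ne (i j : ℕ) {s t : ℕ × Bool} (h : s.2 ≠ t.2) :
    wordTree.dist (linePoint i s) (linePoint j t) = s.1 + t.1 + 1 := by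
  have opposite_sides : ∀ i j k l,
      wordTree.dist (List.replicate k (i + 1) ++ [0]) (List.replicate l (j + 1)) = k + l + 1 := by
    intro i j k l
    have := dist_append_append (s := []) (u := List.replicate k (i + 1) ++ [0])
      (v := List.replicate l (j + 1)) fun a ha ha' => by
        obtain rfl := eq_of_singleton_suffix_replicate ha'
        simp at ha
    simpa [add_right_comm] using this
  obtain ⟨k, b⟩ := s
  obtain ⟨l, c⟩ := t
  cases b <;> cases c <;> try exact absurd rfl h
  · rw [SimpleGraph.dist_comm, add_comm k]
    simpa [linePoint] using opposite_sides j i l k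
  · simpa [linePoint] using opposite_sides i j k l

lemma dist_linePoint_of_ne {i j : ℕ} (hij : i ≠ j) (s t : ℕ × Bool) :
    wordTree.dist (linePoint i s) (linePoint j t) = s.1 + t.1 + if s.2 = t.2 then 0 else 1 := by
  split_ifs with h
  · rw [linePoint, linePoint, h, dist_append_append, List.length_replicate, List.length_replicate,
      add_zero]
    intro a ha ha'
    have := eq_of_singleton_suffix_replicate ha
    have := eq_of_singleton_suffix_replicate ha'
    omega
  · exact dist_linePoint_of_snd_ne i j h

/-- One of the two truncated differences vanishes: their sum is `|s.1 - t.1|`. -/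
lemma dist_linePoint_self (j : ℕ) (s t : ℕ × Bool) :
    wordTree.dist (linePoint j s) (linePoint j t) =
      if s.2 = t.2 then (s.1 - t.1) + (t.1 - s.1) else s.1 + t.1 + 1 := by
  split_ifs with h
  · have replicate_split : ∀ k l, List.replicate k (j + 1) =
        List.replicate (k - l) (j + 1) ++ List.replicate (min k l) (j + 1) := by
      intro k l
      rw [List.replicate_append_replicate, Nat.sub_add_min_cancel]
    rw [linePoint, linePoint, h, replicate_split s.1 t.1, replicate_split t.1 s.1, min_comm t.1,
      List.append_assoc, List.append_assoc, dist_append_append, List.length_replicate,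
      List.length_replicate]
    rcases le_total s.1 t.1 with hst | hst <;> simp [hst]
  · exact dist_linePoint_of_snd_ne j j h

end wordTree

lemma isMomentPositive_of_isPDKernel_wordTree_dist {φ : ℕ → ℂ}
    (hφ : IsPDKernel fun x y => φ (wordTree.dist x y)) : IsMomentPositive φ := by
  intro ε
  have hA : IsPDKernel fun s t : ℕ × Bool => φ (s.1 + t.1 + if s.2 = t.2 then 0 else 1) :=
    hφ.of_copies wordTree.linePoint
      (fun i j hij s t => congrArg φ (wordTree.dist_linePoint_of_ne hij s t))
      (fun j s t => congrArg φ (wordTree.dist_linePoint_self j s t))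
  refine .of_two_mul ?_
  convert hA.sum_sum (fun b k => (k, b)) (fun b _ => if b then (ε : ℂ) else 1) using 3 with k l
  rcases Int.units_eq_one_or ε with rfl | rfl <;> simp [signedShift] <;> ring

/-! ### Halfspaces of a median graph -/

section Median

variable {V : Type*} {G : SimpleGraph V}

lemma exists_adj_dist_eq (hG : G.Connected) {x y : V} {n : ℕ} (h : G.dist x y = n + 1) :
    ∃ x', G.Adj x x' ∧ G.dist x' y = n := by
  obtain ⟨p, hp⟩ := hG.exists_walk_length_eq_dist x y
  cases p with
  | nil => simp at h
  | @cons _ x' _ hadj p =>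
    refine ⟨x', hadj, ?_⟩
    have := SimpleGraph.dist_le p
    have := hG.dist_triangle (u := x) (v := x') (w := y)
    have := SimpleGraph.dist_eq_one_iff_adj.2 hadj
    simp only [SimpleGraph.Walk.length_cons] at hp
    omega

/-- `u` is a median of `x`, `y` and `z`: it lies in the three intervals between them. -/
def IsMedian (G : SimpleGraph V) (x y z u : V) : Prop :=
  G.dist x y = G.dist x u + G.dist y u ∧ G.dist y z = G.dist y u + G.dist z u ∧
    G.dist x z = G.dist x u + G.dist z u

lemma IsMedian.rotate {x y z u : V} (hu : IsMedian G x y z u) : IsMedian G z x y u := by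
  obtain ⟨hxy, hyz, hxz⟩ := hu
  exact ⟨by rw [SimpleGraph.dist_comm, hxz, add_comm], hxy,
    by rw [SimpleGraph.dist_comm, hyz, add_comm]⟩

lemma IsMedian.of_adj (hG : G.Connected) {x y z z' u : V} (hu : IsMedian G x y z u)
    (h : G.Adj z z') (hx : G.dist x z' = G.dist x z + 1) (hy : G.dist y z' = G.dist y z + 1) :
    IsMedian G x y z' u := by
  obtain ⟨hxy, hyz, hxz⟩ := hu
  have := SimpleGraph.dist_eq_one_iff_adj.2 h.symm
  have := hG.dist_triangle (u := z') (v := z) (w := u)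
  have := hG.dist_triangle (u := x) (v := u) (w := z')
  rw [SimpleGraph.dist_comm (u := u)] at this
  refine ⟨hxy, ?_, ?_⟩ <;> omega

/-- The vertices nearer to `a` than to `b`. This is a halfspace in the sense of median graphs when
`a` and `b` are adjacent. -/
def halfspace (G : SimpleGraph V) (a b : V) : Set V := {x | G.dist x a < G.dist x b}

lemma left_mem_halfspace {a b : V} (h : G.Adj a b) : a ∈ halfspace G a b := by
  simp [halfspace, SimpleGraph.dist_eq_one_iff_adj.2 h]

lemma right_notMem_halfspace (a b : V) : b ∉ halfspace G a b := by
  simp [halfspace]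

/-- The halfspaces that contain `x` but not the base point `o`. -/
def separators (G : SimpleGraph V) (o x : V) : Set (Set V) :=
  {H | (∃ a b, G.Adj a b ∧ H = halfspace G a b) ∧ o ∉ H ∧ x ∈ H}

lemma separators_self (o : V) : separators G o o = ∅ :=
  Set.eq_empty_of_forall_notMem fun _ h => h.2.1 h.2.2

namespace IsMedianGraph

variable {V : Type} {G : SimpleGraph V}

lemma existsUnique_isMedian (hG : IsMedianGraph G) (x y z : V) : ∃! u, IsMedian G x y z u := by
  simpa only [IsMedian, SimpleGraph.dist_comm, add_comm] using hG.2 x y z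

lemma dist_adj (hG : IsMedianGraph G) {a b : V} (h : G.Adj a b) (x : V) :
    G.dist x b = G.dist x a + 1 ∨ G.dist x a = G.dist x b + 1 := by
  obtain ⟨u, ⟨hxa, hab, hxb⟩, -⟩ := hG.existsUnique_isMedian x a b
  have := SimpleGraph.dist_eq_one_iff_adj.2 h
  omega

lemma compl_halfspace (hG : IsMedianGraph G) {a b : V} (h : G.Adj a b) :
    (halfspace G a b)ᶜ = halfspace G b a := by
  ext x
  have := hG.dist_adj h x
  simp only [halfspace, Set.mem_compl_iff, Set.mem_ofPred_eq]
  omega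

/-- If some `x` were nearer to `a` and to `e`, then the medians of `c, x, a` and of `e, x, b` would
both be medians of `c, x, b`, hence equal, and the path from `e` to `a` through them too short. -/
lemma halfspace_subset (hG : IsMedianGraph G) {a b c e : V} (hab : G.Adj a b) (hce : G.Adj c e)
    (hc : c ∈ halfspace G a b) (he : e ∉ halfspace G a b) :
    halfspace G a b ⊆ halfspace G c e := by
  intro x hx
  simp only [halfspace, Set.mem_ofPred_eq] at hx hc he ⊢
  by_contra hxce
  have hxb : G.dist x b = G.dist x a + 1 := by have := hG.dist_adj hab x; omega
  have hcb : G.dist c b = G.dist c a + 1 := by have := hG.dist_adj hab c; omega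
  have hea : G.dist e a = G.dist e b + 1 := by have := hG.dist_adj hab e; omega
  have hxc : G.dist x c = G.dist x e + 1 := by have := hG.dist_adj hce x; omega
  have hbc : G.dist b c = G.dist b e + 1 := by
    have ha := hG.dist_adj hce a
    have hb := hG.dist_adj hce b
    simp only [SimpleGraph.dist_comm (u := a), SimpleGraph.dist_comm (u := b)] at ha hb ⊢
    omega
  obtain ⟨u, hu, -⟩ := hG.existsUnique_isMedian c x a
  obtain ⟨v, hv, -⟩ := hG.existsUnique_isMedian x b e
  have hv' : IsMedian G c x b v := (hv.of_adj hG.1 hce.symm hxc hbc).rotate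
  obtain rfl : u = v :=
    (hG.existsUnique_isMedian c x b).unique (hu.of_adj hG.1 hab hcb hxb) hv'
  obtain ⟨-, -, hca⟩ := hu
  obtain ⟨-, hbe, -⟩ := hv
  obtain ⟨-, -, hcb'⟩ := hv'
  have := hG.1.dist_triangle (u := e) (v := u) (w := a)
  rw [SimpleGraph.dist_comm (u := u)] at this
  rw [SimpleGraph.dist_comm (u := b) (v := e)] at hbe
  omega

lemma halfspace_eq_of_adj (hG : IsMedianGraph G) {a b c e : V} (hab : G.Adj a b) (hce : G.Adj c e)
    (hc : c ∈ halfspace G a b) (he : e ∉ halfspace G a b) :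
    halfspace G a b = halfspace G c e := by
  refine (hG.halfspace_subset hab hce hc he).antisymm ?_
  rw [← Set.compl_subset_compl, hG.compl_halfspace hab, hG.compl_halfspace hce]
  exact hG.halfspace_subset hab.symm hce.symm (by rwa [← hG.compl_halfspace hab])
    (by rwa [← hG.compl_halfspace hab, Set.notMem_compl_iff])

lemma symmDiff_separators_of_adj (hG : IsMedianGraph G) {o x y : V} (h : G.Adj x y)
    (ho : o ∈ halfspace G x y) : separators G o x ∆ separators G o y = {halfspace G y x} := by
  have ho' : o ∉ halfspace G y x := by rwa [← hG.compl_halfspace h, Set.notMem_compl_iff]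
  ext H
  simp only [Set.mem_symmDiff, Set.mem_singleton_iff]
  constructor
  · rintro (⟨⟨⟨a, b, hab, rfl⟩, hoH, hx⟩, hy⟩ | ⟨⟨⟨a, b, hab, rfl⟩, hoH, hy⟩, hx⟩)
    · have hy' : y ∉ halfspace G a b := fun hy' => hy ⟨⟨a, b, hab, rfl⟩, hoH, hy'⟩
      exact absurd (hG.halfspace_eq_of_adj hab h hx hy' ▸ ho) hoH
    · exact hG.halfspace_eq_of_adj hab h.symm hy fun hx' => hx ⟨⟨a, b, hab, rfl⟩, hoH, hx'⟩
  · rintro rfl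
    exact .inr ⟨⟨⟨y, x, h.symm, rfl⟩, ho', left_mem_halfspace h.symm⟩,
      fun hx => right_notMem_halfspace y x hx.2.2⟩

lemma encard_symmDiff_separators (hG : IsMedianGraph G) (o x y : V) :
    (separators G o x ∆ separators G o y).encard = G.dist x y := by
  induction h : G.dist x y generalizing x with
  | zero => simp [(hG.1.dist_eq_zero_iff).1 h]
  | succ n ih =>
    obtain ⟨x', hadj, hx'⟩ := exists_adj_dist_eq hG.1 h
    have hy : y ∈ halfspace G x' x := by
      simp only [halfspace, Set.mem_ofPred_eq, SimpleGraph.dist_comm (u := y)]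
      omega
    have hy' : y ∉ halfspace G x x' := by
      rwa [← hG.compl_halfspace hadj.symm, Set.notMem_compl_iff]
    obtain ⟨H, hH, hHy⟩ : ∃ H, separators G o x ∆ separators G o x' = {H} ∧
        (x' ∈ H ↔ y ∈ H) := by
      by_cases ho : o ∈ halfspace G x x'
      · exact ⟨_, hG.symmDiff_separators_of_adj hadj ho,
          iff_of_true (left_mem_halfspace hadj.symm) hy⟩
      · rw [← Set.mem_compl_iff, hG.compl_halfspace hadj] at ho
        exact ⟨_, by rw [symmDiff_comm, hG.symmDiff_separators_of_adj hadj.symm ho],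
          iff_of_false (right_notMem_halfspace x x') hy'⟩
    have hHxy : H ∉ separators G o x' ∆ separators G o y := by
      simp only [Set.mem_symmDiff, separators, Set.mem_ofPred_eq, hHy, and_not_self, or_self,
        not_false_eq_true]
    have insert_eq : separators G o x ∆ separators G o y =
        insert H (separators G o x' ∆ separators G o y) := by
      rw [← symmDiff_symmDiff_cancel_left (separators G o x') (separators G o y), ← symmDiff_assoc,
        hH, (Set.disjoint_singleton_left.2 hHxy).symmDiff_eq_sup, symmDiff_symmDiff_cancel_left]
      exact Set.singleton_union
    rw [insert_eq, Set.encard_insert_of_notMem hHxy, ih x' hx']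
    norm_cast

lemma exists_card_symmDiff_eq_dist (hG : IsMedianGraph G) [DecidableEq (Set V)] :
    ∃ f : V → Finset (Set V), ∀ x y, #(f x ∆ f y) = G.dist x y := by
  obtain ⟨o⟩ := hG.1.nonempty
  have hfin : ∀ x, (separators G o x).Finite := fun x => by
    have := hG.encard_symmDiff_separators o o x
    rw [separators_self, ← Set.bot_eq_empty, bot_symmDiff] at this
    exact Set.finite_of_encard_eq_coe this
  refine ⟨fun x => (hfin x).toFinset, fun x y => ?_⟩
  have := hG.encard_symmDiff_separators o x y
  rw [← (hfin x).coe_toFinset, ← (hfin y).coe_toFinset, ← coe_symmDiff,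
    Set.encard_coe_eq_coe_finsetCard] at this
  exact_mod_cast this

end IsMedianGraph

end Median

/-! ### The comparison theorem -/

theorem stmt_16_general {X ι : Type*} [DecidableEq ι] {d : X → X → ℕ} {f : X → Finset ι}
    (hf : ∀ x y, #(f x ∆ f y) = d x y) {φ : ℕ → ℂ}
    (hφ : IsPDKernel fun x y => φ (wordTree.dist x y)) : IsPDKernel fun x y => φ (d x y) := by
  have hψ := isMomentPositive_of_isPDKernel_wordTree_dist hφ
  simpa only [hf] using hψ.isPDKernel_card_symmDiff.comp f

theorem stmt_16 (V : Type) (G : SimpleGraph V) (hG : IsMedianGraph G) (φ : ℕ → ℂ)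
    (hφ : ∀ (W : Type) (T : SimpleGraph W), IsInfTree T →
        IsPDKernel (fun x y => φ (T.dist x y))) :
    IsPDKernel (fun x y => φ (G.dist x y)) := by
  classical
  obtain ⟨f, hf⟩ := hG.exists_card_symmDiff_eq_dist
  exact stmt_16_general hf (hφ _ _ wordTree.isInfTree)
end
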